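/- Let L be a ℤ-graded Lie conformal algebra of class 𝒱, with structure polynomials p_{i,j} taken with respect to chosen ℂ[∂]-bases, and suppose deg p_{−1,1}(∂) = 1 and deg p_{0,1}(λ) = 1. Then Supp(L) = ℤ, and the ℂ[∂]-bases {Lᵢ : i ∈ ℤ} can be chosen so that for all m, n ∈ ℤ the structure polynomial satisfies p_{m,n}(∂,λ) − (m∂ + (m+n)λ) ∈ ℂ; that is, the degree-one homogeneous part of p_{m,n} equals m∂ + (m+n)λ. -/

import Mathlib

open scoped BigOperators Classical ENNReal
open Polynomial

noncomputable section

/-- A Lie conformal algebra over `ℂ`, encoded via its `n`-th products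
`a_(n) b` and the operator `∂ = D`.  The `λ`-bracket is
`[a_λ b] = ∑ₙ (λⁿ/n!) • (a_(n) b)`. -/
structure LieConformalAlgebra (L : Type) [AddCommGroup L] [Module ℂ L] : Type where
  D : L →ₗ[ℂ] L
  prd : ℕ → L →ₗ[ℂ] L →ₗ[ℂ] L
  bound : ∀ a b : L, ∃ N : ℕ, ∀ n : ℕ, N ≤ n → prd n a b = 0
  sesq : ∀ (n : ℕ) (a b : L), prd n (D a) b = (-(n : ℂ)) • prd (n - 1) a b
  sesq' : ∀ (n : ℕ) (a b : L),
    prd n a (D b) = D (prd n a b) + (n : ℂ) • prd (n - 1) a b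
  skew : ∀ (n : ℕ) (a b : L),
    prd n a b
      = - ∑ᶠ j : ℕ, ((-1 : ℂ) ^ (n + j) * ((Nat.factorial j : ℂ))⁻¹) • (⇑D)^[j] (prd (n + j) b a)
  jacobi : ∀ (m n : ℕ) (a b c : L),
    prd m a (prd n b c) - prd n b (prd m a c)
      = ∑ j ∈ Finset.range (m + 1), (Nat.choose m j : ℂ) • prd (m + n - j) (prd j a b) c

namespace LieConformalAlgebra

variable {L : Type} [AddCommGroup L] [Module ℂ L]

/-- The action of a polynomial `q(∂) ∈ ℂ[∂]` on an element. -/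
def applyP (C : LieConformalAlgebra L) (q : Polynomial ℂ) (x : L) : L :=
  q.sum fun k c => c • (⇑C.D)^[k] x

/-- `[a_λ b] = p(∂, λ) • t`, where `p ∈ ℂ[∂][λ]` is a two-variable polynomial
(outer variable `λ`, inner variable `∂`). -/
def BracketEq (C : LieConformalAlgebra L) (a b t : L) (p : Polynomial (Polynomial ℂ)) : Prop :=
  ∀ n : ℕ, C.prd n a b = (Nat.factorial n : ℂ) • C.applyP (p.coeff n) t

def IsSubalgebra (C : LieConformalAlgebra L) (N : Submodule ℂ L) : Prop :=
  (∀ x ∈ N, C.D x ∈ N) ∧ ∀ n : ℕ, ∀ a ∈ N, ∀ b ∈ N, C.prd n a b ∈ N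

def IsIdeal (C : LieConformalAlgebra L) (N : Submodule ℂ L) : Prop :=
  (∀ x ∈ N, C.D x ∈ N) ∧ ∀ (n : ℕ) (a : L), ∀ b ∈ N, C.prd n a b ∈ N

/-- `L` is finitely generated as a Lie conformal algebra (finite type). -/
def FiniteType (C : LieConformalAlgebra L) : Prop :=
  ∃ s : Finset L, ∀ N : Submodule ℂ L, C.IsSubalgebra N → (s : Set L) ⊆ (N : Set L) → N = ⊤

/-- `L` is finitely generated as a `ℂ[∂]`-module. -/
def FGPolyModule (C : LieConformalAlgebra L) : Prop :=
  ∃ s : Finset L, ∀ N : Submodule ℂ L, (∀ x ∈ N, C.D x ∈ N) → (s : Set L) ⊆ (N : Set L) → N = ⊤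

/-- Iterated adjoint action `a₁_(k₁)(a₂_(k₂)(⋯ x))`. -/
def iterPrd (C : LieConformalAlgebra L) : List (L × ℕ) → L → L
  | [], x => x
  | (a, k) :: t, x => C.prd k a (iterPrd C t x)

/-- The `ℂ[∂]`-rank of the submodule `N` is at most `r`:
any `r+1` elements of `N` are `ℂ[∂]`-linearly dependent. -/
def polyRankLE (C : LieConformalAlgebra L) (N : Submodule ℂ L) (r : ℕ) : Prop :=
  ∀ v : Fin (r + 1) → L, (∀ k, v k ∈ N) →
    ∃ q : Fin (r + 1) → Polynomial ℂ, (∃ k, q k ≠ 0) ∧ ∑ k, C.applyP (q k) (v k) = 0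

/-- The family `v` is a free `ℂ[∂]`-basis of `L`. -/
def IsFreePolyBasis (C : LieConformalAlgebra L) {ι : Type} (v : ι → L) : Prop :=
  LinearIndependent ℂ (fun q : ι × ℕ => (⇑C.D)^[q.2] (v q.1)) ∧
  Submodule.span ℂ (Set.range fun q : ι × ℕ => (⇑C.D)^[q.2] (v q.1)) = ⊤

/-- `[U_λ V]`: the `ℂ`-span of all `u_(n) v`. -/
def bspan (C : LieConformalAlgebra L) (U V : Set L) : Submodule ℂ L :=
  Submodule.span ℂ {x : L | ∃ (n : ℕ) (u : L) (w : L), u ∈ U ∧ w ∈ V ∧ x = C.prd n u w}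

end LieConformalAlgebra

/-- `∂` as an element of `ℂ[∂][λ]`. -/
def Pd : Polynomial (Polynomial ℂ) := Polynomial.C Polynomial.X
/-- `λ` as an element of `ℂ[∂][λ]`. -/
def Pl : Polynomial (Polynomial ℂ) := Polynomial.X
/-- a constant in `ℂ[∂][λ]`. -/
def Pc (a : ℂ) : Polynomial (Polynomial ℂ) := Polynomial.C (Polynomial.C a)

/-- Total degree of a two-variable polynomial in `ℂ[∂][λ]`. -/
def tdeg (p : Polynomial (Polynomial ℂ)) : ℕ :=
  p.support.sup fun n => n + (p.coeff n).natDegree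

section ModelPolynomials

/-- structure polynomials of `𝒱(s)` -/
def pV (s : ℂ) (i j : ℤ) : Polynomial (Polynomial ℂ) :=
  Pd + Pc 2 * Pl + Pc (s * ((i : ℂ) - (j : ℂ)))

/-- structure polynomials of `CL₁(s)` -/
def pCL1 (s : ℂ) (i j : ℤ) : Polynomial (Polynomial ℂ) :=
  Pc ((i : ℂ) + 1) * Pd + Pc ((i : ℂ) + (j : ℂ) + 2) * Pl + Pc (s * ((i : ℂ) - (j : ℂ)))

/-- structure polynomials of `CL₂(b,s)` -/
def pCL2 (b s : ℂ) (i j : ℤ) : Polynomial (Polynomial ℂ) :=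
  Pc ((i : ℂ) + b) * Pd + Pc ((i : ℂ) + (j : ℂ) + 2 * b) * Pl + Pc (s * ((i : ℂ) - (j : ℂ)))

/-- structure polynomials of `SCL₂(b,s)` (for `2b ∈ ℤ`), w.r.t. the basis
`L'ᵢ = Lᵢ (i ≠ -2b)`, `L'_{-2b} = (∂+2s)L_{-2b}` of the corresponding graded
subalgebra of `CL₂(b,s)`. -/
def pSCL2 (b s : ℂ) (i j : ℤ) : Polynomial (Polynomial ℂ) :=
  (if (i : ℂ) = -(2 * b) then Pc (2 * s) - Pl else 1) *
  (if (j : ℂ) = -(2 * b) then Pd + Pl + Pc (2 * s) else 1) *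
  (if (i : ℂ) + (j : ℂ) = -(2 * b) then Pc ((i : ℂ) + b) else pCL2 b s i j)

/-- structure polynomials of `CL₃(s)` -/
def pCL3 (s : ℂ) (i j : ℤ) : Polynomial (Polynomial ℂ) :=
  if i + j = 0 then Pc (i : ℂ) * (Pd + Pc s)
  else if i = 0 then Pc (-(j : ℂ)) * (Pc (2 * s) - Pl)
  else if j = 0 then Pc (i : ℂ) * (Pd + Pl + Pc (2 * s))
  else Pc (i : ℂ) * Pd + Pc ((i : ℂ) + (j : ℂ)) * Pl + Pc (s * ((i : ℂ) - (j : ℂ)))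

/-- structure polynomials of `ECL(s)` -/
def pECL (s : ℂ) (i j : ℤ) : Polynomial (Polynomial ℂ) :=
  if i + j = 0 then Pc (i : ℂ) * (Pd + Pc s) * (Pd + Pc (2 * s))
  else if i = 0 then Pc (-(j : ℂ))
  else if j = 0 then Pc (i : ℂ)
  else Pc (i : ℂ) * Pd + Pc ((i : ℂ) + (j : ℂ)) * Pl + Pc (s * ((i : ℂ) - (j : ℂ)))

/-- structure polynomials of `M(1)` (indices `≥ -1`, completed by skew-symmetry) -/
def pM1 (i j : ℤ) : Polynomial (Polynomial ℂ) :=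
  if i = 1 ∧ j = 1 then Pd + Pc 2 * Pl
  else if i = -1 ∧ 1 ≤ j then Pc (((j : ℂ) + 1) * ((j : ℂ) - 2) / 2)
  else if j = -1 ∧ 1 ≤ i then Pc (-(((i : ℂ) + 1) * ((i : ℂ) - 2) / 2))
  else if i = 0 then Pc (-(j : ℂ))
  else if j = 0 then Pc (i : ℂ)
  else if i = 1 ∧ 2 ≤ j then 1
  else if j = 1 ∧ 2 ≤ i then -1
  else 0

/-- structure polynomials of `M(2)` (completed by skew-symmetry) -/
def pM2 (i j : ℤ) : Polynomial (Polynomial ℂ) :=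
  if i = 1 ∧ j = 1 then Pd + Pc 2 * Pl
  else if i = -1 ∧ j = -1 then Pd + Pc 2 * Pl
  else if i = 0 then Pc (-(j : ℂ))
  else if j = 0 then Pc (i : ℂ)
  else if i = -1 ∧ 1 ≤ j then Pc (((j : ℂ) + 1) * ((j : ℂ) - 2) / 2)
  else if j = -1 ∧ 1 ≤ i then Pc (-(((i : ℂ) + 1) * ((i : ℂ) - 2) / 2))
  else if i = 1 ∧ j ≤ -2 then Pc (((j : ℂ) - 1) * ((j : ℂ) + 2) / 2)
  else if j = 1 ∧ i ≤ -2 then Pc (-(((i : ℂ) - 1) * ((i : ℂ) + 2) / 2))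
  else if i = -1 ∧ j ≤ -2 then 1
  else if j = -1 ∧ i ≤ -2 then -1
  else if i = 1 ∧ 2 ≤ j then 1
  else if j = 1 ∧ 2 ≤ i then -1
  else 0

end ModelPolynomials

namespace LieConformalAlgebra

variable {L : Type} [AddCommGroup L] [Module ℂ L]

/-- `C` is isomorphic to the Virasoro Lie conformal algebra. -/
def IsVir (C : LieConformalAlgebra L) : Prop :=
  ∃ e : L, C.IsFreePolyBasis (fun _ : Unit => e) ∧ C.BracketEq e e e (Pd + Pc 2 * Pl)

/-- `C` is isomorphic to the loop Virasoro Lie conformal algebra `𝒱(s)`. -/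
def IsV (C : LieConformalAlgebra L) (s : ℂ) : Prop :=
  ∃ v : ℤ → L, C.IsFreePolyBasis v ∧
    ∀ i j : ℤ, C.BracketEq (v i) (v j) (v (i + j)) (pV s i j)

/-- `C` is isomorphic to `CL₁(s)`. -/
def IsCL1 (C : LieConformalAlgebra L) (s : ℂ) : Prop :=
  ∃ v : ℤ → L, C.IsFreePolyBasis (fun q : {i : ℤ // -1 ≤ i} => v q.1) ∧
    ∀ i j : ℤ, -1 ≤ i → -1 ≤ j →
      C.BracketEq (v i) (v j) (if -1 ≤ i + j then v (i + j) else 0) (pCL1 s i j)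

/-- `C` is isomorphic to `CL₂(b,s)`. -/
def IsCL2 (C : LieConformalAlgebra L) (b s : ℂ) : Prop :=
  ∃ v : ℤ → L, C.IsFreePolyBasis v ∧
    ∀ i j : ℤ, C.BracketEq (v i) (v j) (v (i + j)) (pCL2 b s i j)

/-- `C` is isomorphic to `SCL₂(b,s)`. -/
def IsSCL2 (C : LieConformalAlgebra L) (b s : ℂ) : Prop :=
  ∃ v : ℤ → L, C.IsFreePolyBasis v ∧
    ∀ i j : ℤ, C.BracketEq (v i) (v j) (v (i + j)) (pSCL2 b s i j)

/-- `C` is isomorphic to `CL₃(s)`. -/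
def IsCL3 (C : LieConformalAlgebra L) (s : ℂ) : Prop :=
  ∃ v : ℤ → L, C.IsFreePolyBasis v ∧
    ∀ i j : ℤ, C.BracketEq (v i) (v j) (v (i + j)) (pCL3 s i j)

/-- `C` is isomorphic to `ECL(s)`. -/
def IsECL (C : LieConformalAlgebra L) (s : ℂ) : Prop :=
  ∃ v : ℤ → L, C.IsFreePolyBasis v ∧
    ∀ i j : ℤ, C.BracketEq (v i) (v j) (v (i + j)) (pECL s i j)

/-- `C` is isomorphic to `M(1)`. -/
def IsM1 (C : LieConformalAlgebra L) : Prop :=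
  ∃ v : ℤ → L, C.IsFreePolyBasis (fun q : {i : ℤ // -1 ≤ i} => v q.1) ∧
    ∀ i j : ℤ, -1 ≤ i → -1 ≤ j →
      C.BracketEq (v i) (v j) (if -1 ≤ i + j then v (i + j) else 0) (pM1 i j)

/-- `C` is isomorphic to `M(2)`. -/
def IsM2 (C : LieConformalAlgebra L) : Prop :=
  ∃ v : ℤ → L, C.IsFreePolyBasis v ∧
    ∀ i j : ℤ, C.BracketEq (v i) (v j) (v (i + j)) (pM2 i j)

/-- `C` is isomorphic to the current Lie conformal algebra `Cur 𝔤`. -/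
def IsCur (C : LieConformalAlgebra L) (g : Type) [LieRing g] [LieAlgebra ℂ g] : Prop :=
  ∃ φ : g →ₗ[ℂ] L,
    Function.Bijective (fun f : ℕ →₀ g => f.sum fun k x => (⇑C.D)^[k] (φ x)) ∧
    (∀ x y : g, C.prd 0 (φ x) (φ y) = φ ⁅x, y⁆) ∧
    ∀ n : ℕ, 1 ≤ n → ∀ x y : g, C.prd n (φ x) (φ y) = 0

/-- `C ≅ Cur sl(2,ℂ)`. -/
def IsCurSl2 (C : LieConformalAlgebra L) : Prop :=
  C.IsCur ↥(LieAlgebra.SpecialLinear.sl (Fin 2) ℂ)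

/-- `C ≅ Cur 𝒲`, `𝒲` the Witt algebra (basis `wᵢ`, `[wᵢ,wⱼ] = (j-i)w_{i+j}`). -/
def IsCurWitt (C : LieConformalAlgebra L) : Prop :=
  ∃ v : ℤ → L, C.IsFreePolyBasis v ∧
    (∀ i j : ℤ, C.prd 0 (v i) (v j) = (((j : ℂ) - (i : ℂ))) • v (i + j)) ∧
    ∀ n : ℕ, 1 ≤ n → ∀ i j : ℤ, C.prd n (v i) (v j) = 0

/-- `C ≅ Cur 𝒲₁`, `𝒲₁` spanned by the `wᵢ`, `i ≥ -1`. -/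
def IsCurWitt1 (C : LieConformalAlgebra L) : Prop :=
  ∃ v : ℤ → L, C.IsFreePolyBasis (fun q : {i : ℤ // -1 ≤ i} => v q.1) ∧
    (∀ i j : ℤ, -1 ≤ i → -1 ≤ j →
      C.prd 0 (v i) (v j) = (((j : ℂ) - (i : ℂ))) • (if -1 ≤ i + j then v (i + j) else 0)) ∧
    ∀ n : ℕ, 1 ≤ n → ∀ i j : ℤ, -1 ≤ i → -1 ≤ j → C.prd n (v i) (v j) = 0

end LieConformalAlgebra

/-- A `ℤ`-graded Lie conformal algebra. -/
structure GradedLCA (L : Type) [AddCommGroup L] [Module ℂ L]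
    extends LieConformalAlgebra L where
  G : ℤ → Submodule ℂ L
  internal : DirectSum.IsInternal G
  dGrade : ∀ i : ℤ, ∀ x ∈ G i, D x ∈ G i
  prdGrade : ∀ (i j : ℤ) (n : ℕ), ∀ a ∈ G i, ∀ b ∈ G j, prd n a b ∈ G (i + j)

namespace GradedLCA

variable {L : Type} [AddCommGroup L] [Module ℂ L]

/-- A graded ideal: an ideal generated by homogeneous elements. -/
def IsGradedIdeal (C : GradedLCA L) (N : Submodule ℂ L) : Prop :=
  C.toLieConformalAlgebra.IsIdeal N ∧ (⨆ i : ℤ, N ⊓ C.G i) = N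

/-- `L` is simple graded: nonzero bracket, and the only graded ideals are `⊥` and `⊤`. -/
def IsSimpleGraded (C : GradedLCA L) : Prop :=
  (∃ (n : ℕ) (a b : L), C.prd n a b ≠ 0) ∧
  ∀ N : Submodule ℂ L, C.IsGradedIdeal N → N = ⊥ ∨ N = ⊤

/-- `[L_λ L] = L`. -/
def Perfect (C : GradedLCA L) : Prop :=
  Submodule.span ℂ {x : L | ∃ (n : ℕ) (a b : L), x = C.prd n a b} = ⊤

/-- Each component `L_i` is a nilpotent `L₀`-module under the adjoint action. -/
def Rootless (C : GradedLCA L) : Prop :=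
  ∀ i : ℤ, ∃ n : ℕ, 1 ≤ n ∧ ∀ l : List (L × ℕ), l.length = n →
    (∀ q ∈ l, q.1 ∈ C.G 0) → ∀ x ∈ C.G i, C.toLieConformalAlgebra.iterPrd l x = 0

/-- The ranks of the components are uniformly bounded. -/
def UniformlyBounded (C : GradedLCA L) : Prop :=
  ∃ N : ℕ, 1 ≤ N ∧ ∀ i : ℤ, C.toLieConformalAlgebra.polyRankLE (C.G i) N

end GradedLCA

/-- A module over a Lie conformal algebra, encoded via the `n`-th actions. -/
structure LCAModule {L : Type} [AddCommGroup L] [Module ℂ L] (C : LieConformalAlgebra L)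
    (M : Type) [AddCommGroup M] [Module ℂ M] : Type where
  DM : M →ₗ[ℂ] M
  act : ℕ → L →ₗ[ℂ] M →ₗ[ℂ] M
  bound : ∀ (a : L) (m : M), ∃ N : ℕ, ∀ n : ℕ, N ≤ n → act n a m = 0
  sesq : ∀ (n : ℕ) (a : L) (m : M), act n (C.D a) m = (-(n : ℂ)) • act (n - 1) a m
  sesq' : ∀ (n : ℕ) (a : L) (m : M),
    act n a (DM m) = DM (act n a m) + (n : ℂ) • act (n - 1) a m
  comm : ∀ (p q : ℕ) (a b : L) (m : M),
    act p a (act q b m) - act q b (act p a m)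
      = ∑ j ∈ Finset.range (p + 1), (Nat.choose p j : ℂ) • act (p + q - j) (C.prd j a b) m

namespace LCAModule

variable {L : Type} [AddCommGroup L] [Module ℂ L] {C : LieConformalAlgebra L}
variable {M : Type} [AddCommGroup M] [Module ℂ M]

/-- Iterated action `a₁_(k₁)(a₂_(k₂)(⋯ m))`. -/
def iterAct (ρ : LCAModule C M) : List (L × ℕ) → M → M
  | [], m => m
  | (a, k) :: t, m => ρ.act k a (iterAct ρ t m)

/-- `N` is an `L`-submodule of `M`. -/
def IsSub (ρ : LCAModule C M) (N : Submodule ℂ M) : Prop :=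
  (∀ m ∈ N, ρ.DM m ∈ N) ∧ ∀ (n : ℕ) (a : L), ∀ m ∈ N, ρ.act n a m ∈ N

/-- `M` is a nilpotent module. -/
def Nilpotent (ρ : LCAModule C M) : Prop :=
  ∃ n : ℕ, 1 ≤ n ∧ ∀ l : List (L × ℕ), l.length = n → ∀ m : M, ρ.iterAct l m = 0

/-- `M` is finitely generated as an `L`-module. -/
def FG (ρ : LCAModule C M) : Prop :=
  ∃ s : Finset M, ∀ N : Submodule ℂ M, ρ.IsSub N → (s : Set M) ⊆ (N : Set M) → N = ⊤

/-- The `L`-submodule `N` is finitely generated as an `L`-module. -/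
def FGIn (ρ : LCAModule C M) (N : Submodule ℂ M) : Prop :=
  ∃ s : Finset M, (s : Set M) ⊆ (N : Set M) ∧
    ∀ P : Submodule ℂ M, ρ.IsSub P → (s : Set M) ⊆ (P : Set M) → N ≤ P

/-- `M` is finitely generated as a `ℂ[∂]`-module. -/
def FGPoly (ρ : LCAModule C M) : Prop :=
  ∃ s : Finset M, ∀ N : Submodule ℂ M, (∀ m ∈ N, ρ.DM m ∈ N) → (s : Set M) ⊆ (N : Set M) → N = ⊤

end LCAModule

/-- A family is `ℂ[∂]`-linearly independent. -/
def polyIndep {M : Type} [AddCommGroup M] [Module ℂ M] (DM : M →ₗ[ℂ] M)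
    {r : ℕ} (v : Fin r → M) : Prop :=
  ∀ q : Fin r → Polynomial ℂ,
    (∑ k, (q k).sum fun t c => c • (⇑DM)^[t] (v k)) = 0 → ∀ k, q k = 0

/-- The `ℂ[∂]`-rank of a submodule, in `ℕ∞`. -/
def polyRank {M : Type} [AddCommGroup M] [Module ℂ M] (DM : M →ₗ[ℂ] M)
    (N : Submodule ℂ M) : ℕ∞ :=
  ⨆ r ∈ {r : ℕ | ∃ v : Fin r → M, (∀ k, v k ∈ N) ∧ polyIndep DM v}, (r : ℕ∞)

/-- A graded module over a `ℤ`-graded Lie conformal algebra. -/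
structure GradedLCAModule {L : Type} [AddCommGroup L] [Module ℂ L] (C : GradedLCA L)
    (M : Type) [AddCommGroup M] [Module ℂ M]
    extends LCAModule C.toLieConformalAlgebra M where
  GM : ℤ → Submodule ℂ M
  internal : DirectSum.IsInternal GM
  dGrade : ∀ i : ℤ, ∀ m ∈ GM i, DM m ∈ GM i
  actGrade : ∀ (i j : ℤ) (n : ℕ), ∀ a ∈ C.G i, ∀ m ∈ GM j, act n a m ∈ GM (i + j)

namespace GradedLCAModule

variable {L : Type} [AddCommGroup L] [Module ℂ L] {C : GradedLCA L}
variable {M : Type} [AddCommGroup M] [Module ℂ M]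

/-- `Mⁿ = ⊕_{|i| ≤ n} M_i`. -/
def seg (ρ : GradedLCAModule C M) (n : ℕ) : Submodule ℂ M :=
  ⨆ i : ℤ, ⨆ _ : |i| ≤ (n : ℤ), ρ.GM i

/-- `e(M) = liminf (1/n) rank_{ℂ[∂]} Mⁿ`. -/
def eM (ρ : GradedLCAModule C M) : ℝ≥0∞ :=
  Filter.atTop.liminf fun n : ℕ => (polyRank ρ.DM (ρ.seg n) : ℝ≥0∞) / (n : ℝ≥0∞)

/-- Each `M_i` is a nilpotent `L₀`-module. -/
def Weightless (ρ : GradedLCAModule C M) : Prop :=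
  ∀ i : ℤ, ∃ n : ℕ, 1 ≤ n ∧ ∀ l : List (L × ℕ), l.length = n →
    (∀ q ∈ l, q.1 ∈ C.G 0) → ∀ m ∈ ρ.GM i, ρ.toLCAModule.iterAct l m = 0

/-- The submodule `I(M)` generated by all homogeneous `v` lying in the span of
the iterated actions of `L` on `v`. -/
def IM (ρ : GradedLCAModule C M) : Submodule ℂ M :=
  sInf {N : Submodule ℂ M | ρ.toLCAModule.IsSub N ∧
    {v : M | (∃ i : ℤ, v ∈ ρ.GM i) ∧
      v ∈ Submodule.span ℂ
        {w : M | ∃ l : List (L × ℕ), 1 ≤ l.length ∧ w = ρ.toLCAModule.iterAct l v}} ⊆ N}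

end GradedLCAModule

/-- The structure context for graded Lie conformal algebras all of whose
nonzero components are free of rank one over `ℂ[∂]`: fixed homogeneous bases
`bas i` and structure polynomials `sp i j ∈ ℂ[∂][λ]`, with `0 ∈ Supp(L)` and
`L₀` abelian. -/
structure RankOneContext (L : Type) [AddCommGroup L] [Module ℂ L]
    extends GradedLCA L where
  bas : ℤ → L
  sp : ℤ → ℤ → Polynomial (Polynomial ℂ)
  bas_mem : ∀ i : ℤ, bas i ∈ G i
  bas_zero : ∀ i : ℤ, G i = ⊥ → bas i = 0
  bas_indep : ∀ i : ℤ, G i ≠ ⊥ → LinearIndependent ℂ fun k : ℕ => (⇑D)^[k] (bas i)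
  bas_span : ∀ i : ℤ, G i ≠ ⊥ →
    G i = Submodule.span ℂ (Set.range fun k : ℕ => (⇑D)^[k] (bas i))
  sp_brkt : ∀ (i j : ℤ) (n : ℕ),
    prd n (bas i) (bas j)
      = (Nat.factorial n : ℂ) • (((sp i j).coeff n).sum fun k c => c • (⇑D)^[k] (bas (i + j)))
  sp_zero : ∀ i j : ℤ, (G i = ⊥ ∨ G j = ⊥ ∨ G (i + j) = ⊥) → sp i j = 0
  supp_zero : G 0 ≠ ⊥
  abelian0 : ∀ n : ℕ, ∀ x ∈ G 0, ∀ y ∈ G 0, prd n x y = 0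

/-- A Lie conformal algebra of class `𝒱`. -/
structure ClassV (L : Type) [AddCommGroup L] [Module ℂ L]
    extends RankOneContext L where
  supp_one : G 1 ≠ ⊥
  supp_negone : G (-1) ≠ ⊥
  genV : ∀ N : Submodule ℂ L, (∀ x ∈ N, D x ∈ N) →
    (∀ n : ℕ, ∀ a ∈ N, ∀ b ∈ N, prd n a b ∈ N) →
    G 1 ≤ N → G 0 ≤ N → G (-1) ≤ N → N = ⊤
  ne_m11 : sp (-1) 1 ≠ 0
  ne_01 : sp 0 1 ≠ 0

/-!
Write `p_{i,j}` as functions of the values of `∂` and `λ`. As `L₀` is abelian, the Jacobi identity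
makes `p_{0,k}` independent of `∂` and additive in the degree, so `p_{0,k} = k (c λ + d)` on the
support. The Jacobi identity for degrees `0, j, k` then becomes a translation equation for
`p_{j,k}` whose only polynomial solutions are `A_{j,k} (j ∂ + (j + k) λ)` plus a constant.
Comparing the coefficients of `∂²` in the general Jacobi identity gives
`A_{j,k} A_{i,j+k} = A_{i,k} A_{j,i+k}`. Because `A_{-1,1}` and `A_{0,1}` do not vanish, neither
does any `A_{1,k}`; hence the support is all of `ℤ`, and the matrix `A` is the coboundary
of a function of the degree, which rescaling the basis removes.
-/

/-! ### Polynomial functions of two variables -/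

section BivariatePolynomial

variable {K : Type*} [Field K]

theorem eq_zero_of_forall_evalEval_eq_zero [Infinite K] {p : K[X][X]}
    (h : ∀ x y, p.evalEval x y = 0) : p = 0 := by
  ext n : 1
  refine Polynomial.funext fun x => ?_
  have hx : p.map (evalRingHom x) = 0 := Polynomial.funext fun y => by
    rw [eval_map, eval₂_evalRingHom, h, eval_zero]
  simpa only [coeff_map, coe_evalRingHom, coeff_zero, eval_zero] using
    congrArg (fun q => q.coeff n) hx

/-- The functions `K × K → K` given by polynomials; the two arguments stand for `∂` and `λ`, in
the order of `Polynomial.evalEval`. -/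
def IsBivariatePolynomial (f : K → K → K) : Prop :=
  ∃ p : K[X][X], ∀ x y, f x y = p.evalEval x y

namespace IsBivariatePolynomial

variable {f g u v : K → K → K}

theorem const (c : K) : IsBivariatePolynomial fun _ _ => c :=
  ⟨C (C c), fun x y => by rw [evalEval_C, eval_C]⟩

theorem fst : IsBivariatePolynomial fun x _ : K => x :=
  ⟨C X, fun x y => by rw [evalEval_C, eval_X]⟩

theorem snd : IsBivariatePolynomial fun _ y : K => y :=
  ⟨X, fun x y => (evalEval_X x y).symm⟩

theorem add (hf : IsBivariatePolynomial f) (hg : IsBivariatePolynomial g) :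
    IsBivariatePolynomial fun x y => f x y + g x y := by
  obtain ⟨p, hp⟩ := hf
  obtain ⟨q, hq⟩ := hg
  exact ⟨p + q, fun x y => by simp only [hp, hq, evalEval_add]⟩

theorem sub (hf : IsBivariatePolynomial f) (hg : IsBivariatePolynomial g) :
    IsBivariatePolynomial fun x y => f x y - g x y := by
  obtain ⟨p, hp⟩ := hf
  obtain ⟨q, hq⟩ := hg
  exact ⟨p - q, fun x y => by simp only [hp, hq, evalEval_sub]⟩

theorem mul (hf : IsBivariatePolynomial f) (hg : IsBivariatePolynomial g) :
    IsBivariatePolynomial fun x y => f x y * g x y := by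
  obtain ⟨p, hp⟩ := hf
  obtain ⟨q, hq⟩ := hg
  exact ⟨p * q, fun x y => by simp only [hp, hq, evalEval_mul]⟩

theorem comp (hf : IsBivariatePolynomial f) (hu : IsBivariatePolynomial u)
    (hv : IsBivariatePolynomial v) : IsBivariatePolynomial fun x y => f (u x y) (v x y) := by
  obtain ⟨p, hp⟩ := hf
  obtain ⟨q, hq⟩ := hu
  obtain ⟨r, hr⟩ := hv
  refine ⟨eval₂ (eval₂RingHom (C.comp C) q) r p, fun x y => ?_⟩
  simp only [hp, hq, hr]
  rw [← coe_evalEvalRingHom x y, hom_eval₂, coe_evalEvalRingHom, ← eval₂_evalRingHom]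
  congr 1
  ext <;> simp

theorem exists_eval_fst (hf : IsBivariatePolynomial f) (y : K) :
    ∃ p : K[X], ∀ x, f x y = p.eval x := by
  obtain ⟨p, hp⟩ := hf
  exact ⟨p.eval (C y), fun x => hp x y⟩

theorem eq_zero_or_eq_zero_of_mul_eq_zero [Infinite K] (hf : IsBivariatePolynomial f)
    (hg : IsBivariatePolynomial g) (h : ∀ x y, f x y * g x y = 0) :
    (∀ x y, f x y = 0) ∨ ∀ x y, g x y = 0 := by
  obtain ⟨p, hp⟩ := hf
  obtain ⟨q, hq⟩ := hg
  have hpq : p * q = 0 := eq_zero_of_forall_evalEval_eq_zero fun x y => by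
    rw [evalEval_mul, ← hp, ← hq, h]
  refine (mul_eq_zero.1 hpq).imp ?_ ?_
  · rintro rfl x y
    rw [hp, evalEval_zero]
  · rintro rfl x y
    rw [hq, evalEval_zero]

theorem eq_zero_of_section_eq_zero [Infinite K] (hf : IsBivariatePolynomial f)
    (h : ∀ x l m, f (x + l) m * f x l = f (x + m) l * f x m) {x₀ : K} (h₀ : ∀ l, f x₀ l = 0)
    (x l : K) : f x l = 0 := by
  obtain hzero | hzero := eq_zero_or_eq_zero_of_mul_eq_zero
    (f := fun l m => f (x₀ - l + m) l) (g := fun l m => f (x₀ - l) m)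
    (hf.comp (((const x₀).sub fst).add snd) fst) (hf.comp ((const x₀).sub fst) snd)
    fun l m => by rw [← h, sub_add_cancel, h₀, zero_mul]
  · convert hzero l (x - x₀ + l) using 2
    ring
  · convert hzero (x₀ - x) l using 2
    ring

theorem eq_zero_of_apply_eq_zero [Infinite K] (hf : IsBivariatePolynomial f)
    (h : ∀ x l m, f (x + l) m * f x l = f (x + m) l * f x m) {x₀ l : K} (h₀ : f x₀ l = 0)
    (x : K) : f x l = 0 := by
  obtain hzero | hzero := eq_zero_or_eq_zero_of_mul_eq_zero
    (f := fun m _ => f (x₀ + m) l) (g := fun m _ => f x₀ m)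
    (hf.comp ((const x₀).add fst) (const l)) (hf.comp (const x₀) fst)
    fun m _ => by rw [← h, h₀, mul_zero]
  · convert hzero (x - x₀) 0 using 2
    ring
  · exact eq_zero_of_section_eq_zero hf h (fun m => hzero m 0) x l

-- A section `f(·, l)` is either constant or has a root, and in the latter case it vanishes.
theorem eq_apply_zero_of_mul_comm [IsAlgClosed K] (hf : IsBivariatePolynomial f)
    (h : ∀ x l m, f (x + l) m * f x l = f (x + m) l * f x m) (x l : K) : f x l = f 0 l := by
  obtain ⟨p, hp⟩ := hf.exists_eval_fst l
  by_cases hdeg : p.degree = 0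
  · rw [hp, hp, eq_C_of_degree_eq_zero hdeg, eval_C, eval_C]
  · obtain ⟨z, hz⟩ := IsAlgClosed.exists_root p hdeg
    have hvanish := eq_zero_of_apply_eq_zero hf h ((hp z).trans hz)
    rw [hvanish, hvanish]

-- Compare the coefficients of the highest power of `m`, then those of the highest power of `x`.
theorem eq_add_of_shift_eq [Infinite K] (hf : IsBivariatePolynomial f) (hne : f ≠ 0)
    {l a b c : K} (h : ∀ x m, a * f (x + l) m = b * f x (l + m) + c * f x m) : a = b + c := by
  obtain ⟨p, hp⟩ := hf
  have hp₀ : p ≠ 0 := by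
    rintro rfl
    exact hne (funext₂ fun x y => by rw [hp, evalEval_zero]; rfl)
  have hpoly : C (C a) * p.map (taylorAlgHom l : K[X] →+* K[X])
      = C (C b) * taylor (C l) p + C (C c) * p := by
    refine sub_eq_zero.1 (eq_zero_of_forall_evalEval_eq_zero fun x m => ?_)
    have hmap : (p.map (taylorAlgHom l : K[X] →+* K[X])).evalEval x m = p.evalEval (x + l) m := by
      rw [← eval₂_evalRingHom, ← eval₂_evalRingHom, eval₂_map]
      congr 1
      ext <;> simp
    have htaylor : (taylor (C l) p).evalEval x m = p.evalEval x (l + m) := by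
      rw [evalEval, taylor_eval, ← C_add, add_comm m l, evalEval]
    rw [evalEval_sub, evalEval_add, evalEval_mul, evalEval_mul, evalEval_mul, hmap, htaylor,
      ← hp, ← hp, ← hp]
    simpa only [evalEval_C, eval_C, sub_eq_zero] using h x m
  have hlead := congrArg (fun q => (q.coeff p.natDegree).leadingCoeff) hpoly
  simp only [coeff_C_mul, coeff_add, coeff_map, coeff_taylor_natDegree] at hlead
  rw [coeff_natDegree, ← add_mul, ← C_add, leadingCoeff_mul, leadingCoeff_mul, leadingCoeff_C,
    leadingCoeff_C, RingHom.coe_coe, taylorAlgHom_apply, leadingCoeff_taylor] at hlead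
  exact mul_right_cancel₀ (leadingCoeff_ne_zero.2 (leadingCoeff_ne_zero.2 hp₀)) hlead

end IsBivariatePolynomial

theorem eval_eq_of_additive [CharZero K] {p : K[X]}
    (h : ∀ x y, p.eval (x + y) + p.eval 0 = p.eval x + p.eval y) (x : K) :
    p.eval x = (p.eval 1 - p.eval 0) * x + p.eval 0 := by
  have hnat (n : ℕ) : p.eval (n : K) = (p.eval 1 - p.eval 0) * n + p.eval 0 := by
    induction n with
    | zero => simp
    | succ n ih => push_cast; linear_combination ih + h n 1
  have hp : p = C (p.eval 1 - p.eval 0) * X + C (p.eval 0) := by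
    refine eq_of_infinite_eval_eq _ _ (.mono ?_ (Set.infinite_range_of_injective
      (Nat.cast_injective (R := K))))
    rintro _ ⟨n, rfl⟩
    simpa using hnat n
  simpa using congrArg (eval x) hp

theorem natDegree_le_one_of_eval_mul_linear_eq_quadratic [Infinite K] {p : K[X]} {a b c d e : K}
    (hd : d ≠ 0) (h : ∀ x, p.eval x * (d * x + e) = a * x ^ 2 + b * x + c) : p.natDegree ≤ 1 := by
  have hp : p * (C d * X + C e) = C a * X ^ 2 + C b * X + C c :=
    Polynomial.funext fun x => by simpa using h x
  rcases eq_or_ne p 0 with rfl | hp₀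
  · simp
  have hdeg := natDegree_quadratic_le (R := K) (a := a) (b := b) (c := c)
  rw [← hp, natDegree_mul hp₀ (fun h₀ => by simpa [h₀] using natDegree_linear (b := e) hd),
    natDegree_linear hd] at hdeg
  omega

theorem exists_evalEval_eq_mul_fst_add {p : K[X][X]} (hp : p.natDegree = 0)
    (hp₀ : (p.coeff 0).natDegree = 1) :
    ∃ a b, a ≠ 0 ∧ ∀ x y, p.evalEval x y = a * x + b := by
  obtain ⟨a, ha, b, hab⟩ := natDegree_eq_one.1 hp₀
  refine ⟨a, b, ha, fun x y => ?_⟩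
  rw [eq_C_of_natDegree_eq_zero hp, evalEval_C, ← hab, eval_add, eval_C_mul, eval_X, eval_C]

theorem exists_evalEval_eq_mul_snd_add {p : K[X][X]} (hp : p.natDegree = 1)
    (hcoeff : ∀ n, (p.coeff n).natDegree = 0) :
    ∃ a b, a ≠ 0 ∧ ∀ x y, p.evalEval x y = a * y + b := by
  obtain ⟨q, hq, r, rfl⟩ := natDegree_eq_one.1 hp
  obtain ⟨a, rfl⟩ := natDegree_eq_zero.1 (by simpa using hcoeff 1 : q.natDegree = 0)
  obtain ⟨b, rfl⟩ := natDegree_eq_zero.1 (by simpa using hcoeff 0 : r.natDegree = 0)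
  refine ⟨a, b, C_ne_zero.1 hq, fun x y => ?_⟩
  simp only [evalEval_add, evalEval_mul, evalEval_C, eval_C, evalEval_X]

theorem eval_eval_eq_evalEval (p : K[X][X]) (q : K[X]) (x : K) :
    (p.eval q).eval x = p.evalEval x (q.eval x) := by
  rw [← coe_evalRingHom, ← eval₂_at_apply, coe_evalRingHom, eval₂_evalRingHom]

end BivariatePolynomial

/-! ### Systems of structure functions -/

section StructureFunctions

variable {K : Type*} [Field K]

/-- The functions `f(∂, λ)` of two variables that agree with `A (j ∂ + (j + k) λ)` up to a
constant: the shape that all structure functions of degrees `j`, `k` turn out to have. -/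
def HasSlope (f : K → K → K) (j k A : K) : Prop :=
  ∃ B, ∀ x l, f x l = A * (j * x + (j + k) * l) + B

/-- The translation equation imposed by the Jacobi identity on the structure function of
degrees `j`, `k` when the degree zero component acts with weights proportional to the degree. -/
def ShiftEq (f : K → K → K) (j k : K) : Prop :=
  ∀ x l m, (j + k) * f (x + l) m = j * f x (l + m) + k * f x m

theorem HasSlope.eq_left {f : K → K → K} {j k A A' : K} (h : HasSlope f j k A)
    (h' : HasSlope f j k A') (hj : j ≠ 0) : A = A' := by
  obtain ⟨B, hB⟩ := h
  obtain ⟨B', hB'⟩ := h'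
  refine mul_right_cancel₀ hj ?_
  linear_combination hB' 1 0 - hB 1 0 + hB 0 0 - hB' 0 0

namespace ShiftEq

variable {f : K → K → K} {j k : K}

theorem apply_eq_apply_zero (hj : j ≠ 0) (hjk : j + k = 0) (h : ShiftEq f j k) (x l : K) :
    f x l = f x 0 := by
  refine mul_left_cancel₀ hj ?_
  have hxl := h x l 0
  rw [add_zero] at hxl
  linear_combination (f (x + l) 0 - f x 0) * hjk - hxl

-- Setting `x = 0` expresses `f` through `f(0, ·)`, which is then additive up to a constant.
theorem exists_hasSlope [CharZero K] (hf : IsBivariatePolynomial f) (hj : j ≠ 0) (hk : k ≠ 0)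
    (hjk : j + k ≠ 0) (h : ShiftEq f j k) : ∃ A, HasSlope f j k A := by
  have hsection (l m : K) : (j + k) * f l m = j * f 0 (l + m) + k * f 0 m := by
    simpa only [zero_add] using h 0 l m
  obtain ⟨p, hp⟩ := (hf.comp (.const 0) .fst).exists_eval_fst 0
  have hadd (x y : K) : p.eval (x + y) + p.eval 0 = p.eval x + p.eval y := by
    have hxy := h x y 0
    rw [add_zero] at hxy
    have hxy' := hsection (x + y) 0
    have hx := hsection x 0
    have hxy'' := hsection x y
    simp only [add_zero, hp] at *
    refine mul_left_cancel₀ (mul_ne_zero hj hk) ?_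
    linear_combination (j + k) * hxy - (j + k) * hxy' + k * hx + j * hxy''
  refine ⟨(p.eval 1 - p.eval 0) / (j + k), p.eval 0, fun x l => mul_left_cancel₀ hjk ?_⟩
  rw [hsection, hp, hp, eval_eq_of_additive hadd (x + l), eval_eq_of_additive hadd l]
  field_simp
  ring

end ShiftEq

/-- The structure functions `F i j`, with `[Lᵢ _λ Lⱼ] = F i j ∂ λ L_{i+j}`, of a `ℤ`-graded Lie
conformal algebra with components of rank at most one and abelian degree zero component. -/
structure IsStructureSystem (F : ℤ → ℤ → K → K → K) : Prop where
  poly : ∀ i j, IsBivariatePolynomial (F i j)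
  jacobi : ∀ i j k x l m, F j k (x + l) m * F i (j + k) x l
    = F i j (-l - m) l * F (i + j) k x (l + m) + F i k (x + m) l * F j (i + k) x m
  skew : ∀ i j x l, F i j x l = -F j i x (-l - x)
  zero_zero : ∀ x l, F 0 0 x l = 0

/-- The generator of degree zero acts in degree `k` by `k (c λ + d)`. -/
def HasWeight (F : ℤ → ℤ → K → K → K) (c d : K) (k : ℤ) : Prop :=
  ∀ x l, F 0 k x l = k * (c * l + d)

theorem HasWeight.hasSlope {F : ℤ → ℤ → K → K → K} {c d : K} {k : ℤ} (h : HasWeight F c d k) :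
    HasSlope (F 0 k) (0 : ℤ) k c :=
  ⟨k * d, fun x l => by rw [h]; push_cast; ring⟩

theorem exists_int_seq {G : Type*} [Group G] (g : G) (a : ℤ → G) :
    ∃ s : ℤ → G, s 0 = g ∧ ∀ k, s (k + 1) = s k * a k := by
  refine ⟨fun k => Int.inductionOn' k 0 g (fun k _ x => x * a k) fun k _ x => x * (a (k - 1))⁻¹,
    Int.inductionOn'_self, fun k => ?_⟩
  rcases le_or_gt 0 k with hk | hk
  · exact Int.inductionOn'_add_one hk
  · have hpred := Int.inductionOn'_sub_one (motive := fun _ => G) (zero := g)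
      (succ := fun k _ x => x * a k) (pred := fun k _ x => x * (a (k - 1))⁻¹)
      (z := k + 1) (b := 0) hk
    simp only [add_sub_cancel_right] at hpred
    dsimp only
    rw [hpred, inv_mul_cancel_right]

namespace IsStructureSystem

variable {F : ℤ → ℤ → K → K → K} {c d : K} {j k : ℤ}

theorem hasSlope_swap (hF : IsStructureSystem F) {A : K} (h : HasSlope (F j k) j k A) :
    HasSlope (F k j) k j A := by
  obtain ⟨B, hB⟩ := h
  exact ⟨-B, fun x l => by rw [hF.skew, hB]; ring⟩

theorem zero_left_apply [IsAlgClosed K] (hF : IsStructureSystem F) (k : ℤ) (x l : K) :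
    F 0 k x l = F 0 k 0 l :=
  (hF.poly 0 k).eq_apply_zero_of_mul_comm (fun x l m => by
    simpa only [zero_add, hF.zero_zero, zero_mul] using hF.jacobi 0 0 k x l m) x l

theorem hasWeight_add [IsAlgClosed K] (hF : IsStructureSystem F) (hj : HasWeight F c d j)
    (hk : HasWeight F c d k) (hjk : F j k ≠ 0) : HasWeight F c d (j + k) := fun x l => by
  have hadd := (hF.poly j k).eq_add_of_shift_eq hjk (l := l) (a := F 0 (j + k) x l)
    (b := j * (c * l + d)) (c := k * (c * l + d)) fun y m => by
      have hjac := hF.jacobi 0 j k y l m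
      rw [hF.zero_left_apply (j + k), ← hF.zero_left_apply (j + k) x, hj, hk, zero_add,
        zero_add] at hjac
      linear_combination hjac
  rw [hadd]
  push_cast
  ring

theorem hasWeight_neg_one [IsAlgClosed K] (hF : IsStructureSystem F) (h₁ : HasWeight F c d 1)
    (hne : F (-1) 1 ≠ 0) : HasWeight F c d (-1) := fun x l => by
  have hadd := (hF.poly (-1) 1).eq_add_of_shift_eq hne (l := l) (a := 0)
    (b := F 0 (-1) x l) (c := c * l + d) fun y m => by
      have hjac := hF.jacobi 0 (-1) 1 y l m
      rw [hF.zero_left_apply (-1), ← hF.zero_left_apply (-1) x, h₁] at hjac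
      simp only [neg_add_cancel, hF.zero_zero, zero_add, mul_zero] at hjac
      push_cast at hjac
      linear_combination hjac
  push_cast
  linear_combination -hadd

open IsBivariatePolynomial in
theorem shiftEq [IsAlgClosed K] (hF : IsStructureSystem F) (hc : c ≠ 0) (hj : HasWeight F c d j)
    (hk : HasWeight F c d k) : ShiftEq (F j k) j k := by
  intro x l m
  by_cases hzero : F j k = 0
  · simp only [hzero, Pi.zero_apply, mul_zero, add_zero]
  have hjk := hF.hasWeight_add hj hk hzero
  have hf := hF.poly j k
  have hweight : IsBivariatePolynomial fun l _ => c * l + d := ((const c).mul fst).add (const d)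
  have hdiff : IsBivariatePolynomial fun l _ =>
      (j + k) * F j k (x + l) m - (j * F j k x (l + m) + k * F j k x m) :=
    ((const _).mul (hf.comp ((const x).add fst) (const m))).sub
      (((const _).mul (hf.comp (const x) (fst.add (const m)))).add (const _))
  obtain h | h := hweight.eq_zero_or_eq_zero_of_mul_eq_zero hdiff fun l _ => by
    have hjac := hF.jacobi 0 j k x l m
    rw [hjk, hj, hk, zero_add, zero_add] at hjac
    push_cast at hjac
    linear_combination hjac
  · exact absurd (by linear_combination h 1 0 - h 0 0) hc
  · exact sub_eq_zero.1 (h l 0)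

theorem exists_hasSlope_of_add_ne_zero [IsAlgClosed K] [CharZero K] (hF : IsStructureSystem F)
    (hc : c ≠ 0) (hweight : ∀ i j, F i j ≠ 0 → HasWeight F c d i ∧ HasWeight F c d j)
    (hjk : j + k ≠ 0) : ∃ A, HasSlope (F j k) j k A := by
  by_cases hne : F j k = 0
  · exact ⟨0, 0, fun x l => by simp only [hne, Pi.zero_apply, zero_mul, add_zero]⟩
  obtain ⟨hj, hk⟩ := hweight j k hne
  rcases eq_or_ne j 0 with rfl | hj₀
  · exact ⟨c, hk.hasSlope⟩
  rcases eq_or_ne k 0 with rfl | hk₀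
  · exact ⟨c, hF.hasSlope_swap hj.hasSlope⟩
  · exact (hF.shiftEq hc hj hk).exists_hasSlope (hF.poly j k) (Int.cast_ne_zero.2 hj₀)
      (Int.cast_ne_zero.2 hk₀) (mod_cast hjk)

-- In the Jacobi identity for the degrees `1, j, -j`, all factors but `F j (-j)` are known to be
-- affine, and `F j (-j)` is multiplied by `F 1 0`, which has degree exactly one.
theorem exists_hasSlope_neg [IsAlgClosed K] [CharZero K] (hF : IsStructureSystem F)
    (hc : c ≠ 0) (hweight : ∀ i j, F i j ≠ 0 → HasWeight F c d i ∧ HasWeight F c d j)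
    (h₁ : HasWeight F c d 1) (hj₀ : j ≠ 0) (hj₁ : j ≠ 1) :
    ∃ A, HasSlope (F j (-j)) j (-j : ℤ) A := by
  by_cases hne : F j (-j) = 0
  · exact ⟨0, 0, fun x l => by simp only [hne, Pi.zero_apply, zero_mul, add_zero]⟩
  obtain ⟨hj, hj'⟩ := hweight _ _ hne
  have hj₀' : (j : K) ≠ 0 := Int.cast_ne_zero.2 hj₀
  obtain ⟨B₁, hB₁⟩ := hF.hasSlope_swap h₁.hasSlope
  obtain ⟨A₂, B₂, hB₂⟩ := hF.exists_hasSlope_of_add_ne_zero hc hweight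
    (j := 1 + j) (k := -j) (by omega)
  obtain ⟨A₃, B₃, hB₃⟩ := hF.exists_hasSlope_of_add_ne_zero hc hweight
    (j := 1) (k := -j) (by omega)
  obtain ⟨A₄, B₄, hB₄⟩ := hF.exists_hasSlope_of_add_ne_zero hc hweight
    (j := j) (k := 1 + -j) (by omega)
  obtain ⟨p, hp⟩ := (hF.poly j (-j)).exists_eval_fst 0
  have hdeg : p.natDegree ≤ 1 := by
    refine natDegree_le_one_of_eval_mul_linear_eq_quadratic hc (e := B₁) (a := A₃ * A₄ * j)
      (b := F 1 j 0 0 * A₂ * (1 + j) + A₃ * B₄ + B₃ * A₄ * j)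
      (c := F 1 j 0 0 * B₂ + B₃ * B₄) fun x => ?_
    have hjac := hF.jacobi 1 j (-j) x 0 0
    rw [add_neg_cancel, sub_zero, neg_zero, add_zero, add_zero, hB₁, hB₂, hB₃, hB₄, hp] at hjac
    push_cast at hjac
    linear_combination hjac
  refine ⟨p.coeff 1 / j, p.coeff 0, fun x l => ?_⟩
  rw [(hF.shiftEq hc hj hj').apply_eq_apply_zero hj₀' (by simp), hp,
    eq_X_add_C_of_natDegree_le_one hdeg]
  push_cast
  simp only [eval_add, eval_mul, eval_C, eval_X, coeff_add, coeff_C_mul, coeff_X_one, coeff_C_zero,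
    coeff_C_succ, coeff_X_zero]
  field_simp
  ring

theorem exists_hasSlope [IsAlgClosed K] [CharZero K] (hF : IsStructureSystem F)
    (hc : c ≠ 0) (hweight : ∀ i j, F i j ≠ 0 → HasWeight F c d i ∧ HasWeight F c d j)
    (h₁ : HasWeight F c d 1) {a : K} (ha : HasSlope (F (-1) 1) (-1 : ℤ) (1 : ℤ) a) (j k : ℤ) :
    ∃ A, HasSlope (F j k) j k A := by
  by_cases hjk : j + k = 0
  · obtain rfl : k = -j := by omega
    rcases eq_or_ne j 0 with rfl | hj₀
    · exact ⟨0, 0, fun x l => by simpa using hF.zero_zero x l⟩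
    rcases eq_or_ne j 1 with rfl | hj₁
    · exact ⟨a, hF.hasSlope_swap ha⟩
    · exact hF.exists_hasSlope_neg hc hweight h₁ hj₀ hj₁
  · exact hF.exists_hasSlope_of_add_ne_zero hc hweight hjk

-- The coefficients of `x ^ 2` in the Jacobi identity.
theorem slope_mul_slope [CharZero K] (hF : IsStructureSystem F) {A : ℤ → ℤ → K}
    (hA : ∀ j k, HasSlope (F j k) j k (A j k)) {i j : ℤ} (hi : i ≠ 0) (hj : j ≠ 0) (k : ℤ) :
    A j k * A i (j + k) = A i k * A j (i + k) := by
  choose B hB using hA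
  have hjac (x : K) := hF.jacobi i j k x 0 0
  simp only [hB, mul_zero, add_zero, sub_zero, neg_zero] at hjac
  refine mul_left_cancel₀ (mul_ne_zero (Int.cast_ne_zero.2 hi : (i : K) ≠ 0)
    (Int.cast_ne_zero.2 hj)) ?_
  linear_combination (1 / 2) * hjac 1 + (1 / 2) * hjac (-1) - hjac 0

theorem slope_one_ne_zero [CharZero K] (hF : IsStructureSystem F) {A : ℤ → ℤ → K}
    (hA : ∀ j k, HasSlope (F j k) j k (A j k)) (h₁₀ : A 1 0 ≠ 0) (h₁₁ : A (-1) 1 ≠ 0) (k : ℤ) :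
    A 1 k ≠ 0 := by
  have hperiodic : Function.Periodic (fun k => A 1 k * A (-1) (1 + k)) 1 := fun k => by
    have hmul := hF.slope_mul_slope hA (i := -1) (j := 1) (by decide) (by decide) (k + 1)
    rw [neg_add_cancel_comm_assoc, add_comm k] at hmul
    dsimp only
    rw [add_comm k, hmul, mul_comm]
  refine left_ne_zero_of_mul (b := A (-1) (1 + k)) ?_
  have hconst := hperiodic.int_mul_eq k
  simp only [mul_one, add_zero, Int.cast_id] at hconst
  rw [hconst]
  exact mul_ne_zero h₁₀ h₁₁

-- Rescaling by `s` makes all slopes `A 1 k` equal to `1`, and then `slope_mul_slope` with `i = 1`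
-- shows that the rescaled `A m n` does not depend on `n`.
theorem exists_hasSlope_units_div [CharZero K] (hF : IsStructureSystem F) (hc : c ≠ 0)
    (hweight : ∀ k, HasWeight F c d k) {A : ℤ → ℤ → K}
    (hA : ∀ j k, HasSlope (F j k) j k (A j k)) (hA₁ : ∀ k, A 1 k ≠ 0) :
    ∃ s : ℤ → Kˣ, ∀ m n, HasSlope (F m n) m n ↑(s (m + n) / (s m * s n)) := by
  have hzero {m : ℤ} (hm : m ≠ 0) : A m 0 = c :=
    (hA m 0).eq_left (hF.hasSlope_swap (hweight m).hasSlope) (Int.cast_ne_zero.2 hm)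
  obtain ⟨s, hs₀, hs⟩ := exists_int_seq (Units.mk0 c hc)⁻¹ fun k => Units.mk0 (A 1 k) (hA₁ k)
  refine ⟨s, fun m n => ?_⟩
  rcases eq_or_ne m 0 with rfl | hm
  · simpa [hs₀] using (hweight n).hasSlope
  suffices h : s m * s n * A m n = s (m + n) by
    convert hA m n using 1
    rw [Units.val_div_eq_div_val, ← h, Units.val_mul, mul_div_cancel_left₀ _ (by simp)]
  have hs' (k : ℤ) : (s (k + 1) : K) = s k * A 1 k := by rw [hs, Units.val_mul, Units.val_mk0]
  have hstep (n : ℤ) : s m * s (n + 1) * A m (n + 1) = s (m + (n + 1)) ↔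
      s m * s n * A m n = s (m + n) := by
    have hmul := hF.slope_mul_slope hA one_ne_zero hm n
    rw [← mul_left_inj' (hA₁ (m + n)) (a := s m * s n * A m n), ← add_assoc, hs', hs', add_comm n]
    exact ⟨fun h => by linear_combination h + s m * s n * hmul,
      fun h => by linear_combination h - s m * s n * hmul⟩
  induction n with
  | zero => simp [hs₀, hzero hm, hc]
  | succ n ih => exact (hstep n).2 ih
  | pred n ih => exact (hstep _).1 (by rwa [sub_add_cancel])

theorem ne_zero_and_exists_hasSlope [IsAlgClosed K] [CharZero K] (hF : IsStructureSystem F)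
    (hweight : ∀ i j, F i j ≠ 0 → HasWeight F c d i ∧ HasWeight F c d j)
    (h₁ : HasWeight F c d 1) (hc : c ≠ 0) {a : K}
    (hneg : HasSlope (F (-1) 1) (-1 : ℤ) (1 : ℤ) a) (ha : a ≠ 0) :
    (∀ k, F 1 k ≠ 0) ∧
      ∃ s : ℤ → Kˣ, ∀ m n, HasSlope (F m n) m n ↑(s (m + n) / (s m * s n)) := by
  choose A hA using hF.exists_hasSlope hc hweight h₁ hneg
  have h₁₀ : A 1 0 = c := (hA 1 0).eq_left (hF.hasSlope_swap h₁.hasSlope) (by simp)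
  have h₁₁ : A (-1) 1 = a := (hA (-1) 1).eq_left hneg (by simp)
  have hA₁ := hF.slope_one_ne_zero hA (h₁₀ ▸ hc) (h₁₁ ▸ ha)
  have hne (k : ℤ) : F 1 k ≠ 0 := fun hzero =>
    hA₁ k ((hA 1 k).eq_left ⟨0, fun x l => by simp [hzero]⟩ (by simp))
  exact ⟨hne, hF.exists_hasSlope_units_div hc (fun k => (hweight 1 k (hne k)).2) hA hA₁⟩

end IsStructureSystem

end StructureFunctions

/-! ### The `λ`-bracket at a numerical value of `λ` -/

open Filter Finset in
theorem sum_range_sum_range_eq_of_triangle {M : Type*} [AddCommMonoid M] {N : ℕ} {f : ℕ → ℕ → M}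
    (hf : ∀ j r, N ≤ j + r → f j r = 0) :
    ∑ j ∈ range N, ∑ r ∈ range N, f j r = ∑ m ∈ range N, ∑ j ∈ range (m + 1), f j (m - j) := by
  rw [sum_range_diag_flip]
  refine sum_congr rfl fun j _ => (sum_subset (range_mono (Nat.sub_le N j)) fun r _ hr => ?_).symm
  rw [mem_range, not_lt] at hr
  exact hf j r (by omega)

open Finset in
theorem sum_choose_smul_eq_sum_add_pow {R M : Type*} [Ring R] [AddCommGroup M] [Module R M]
    {x y : R} (h : Commute x y) {N : ℕ} {u : ℕ → M} (hu : ∀ k, N ≤ k → u k = 0) :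
    ∑ r ∈ range N, ∑ n ∈ range N, (x ^ r * y ^ n * ((r + n).choose r : R)) • u (r + n)
      = ∑ k ∈ range N, (x + y) ^ k • u k := by
  rw [sum_range_sum_range_eq_of_triangle fun r n h => by rw [hu _ h, smul_zero]]
  refine sum_congr rfl fun k _ => ?_
  rw [h.add_pow, sum_smul]
  refine sum_congr rfl fun r hr => ?_
  rw [Nat.add_sub_cancel' (mem_range_succ_iff.1 hr)]

namespace LieConformalAlgebra

open Filter Finset

variable {L : Type} [AddCommGroup L] [Module ℂ L]

theorem applyP_eq_aeval (C : LieConformalAlgebra L) (q : ℂ[X]) (x : L) :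
    C.applyP q x = aeval C.D q x := by
  rw [applyP, aeval_eq_sum_range, LinearMap.sum_apply,
    Polynomial.sum_over_range _ fun k => zero_smul ℂ ((⇑C.D)^[k] x)]
  simp only [LinearMap.smul_apply, Module.End.pow_apply]

/-- The coefficient of `λⁿ` in `[a _λ b]`, that is the `n`-th product divided by `n!`. -/
def dividedPrd (C : LieConformalAlgebra L) (n : ℕ) : L →ₗ[ℂ] L →ₗ[ℂ] L :=
  (n.factorial : ℂ)⁻¹ • C.prd n

theorem dividedPrd_apply (C : LieConformalAlgebra L) (n : ℕ) (a b : L) :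
    C.dividedPrd n a b = (n.factorial : ℂ)⁻¹ • C.prd n a b := rfl

theorem bracketEq_iff (C : LieConformalAlgebra L) (a b t : L) (p : ℂ[X][X]) :
    C.BracketEq a b t p ↔ ∀ n, C.dividedPrd n a b = aeval C.D (p.coeff n) t := by
  refine forall_congr' fun n => ?_
  rw [dividedPrd_apply, applyP_eq_aeval,
    inv_smul_eq_iff₀ (Nat.cast_ne_zero.2 n.factorial_ne_zero)]

theorem eventually_dividedPrd_eq_zero (C : LieConformalAlgebra L) (a b : L) :
    ∀ᶠ n in atTop, C.dividedPrd n a b = 0 := by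
  obtain ⟨N, hN⟩ := C.bound a b
  filter_upwards [eventually_ge_atTop N] with n hn
  rw [dividedPrd_apply, hN n hn, smul_zero]

theorem dividedPrd_D_left_zero (C : LieConformalAlgebra L) (a b : L) :
    C.dividedPrd 0 (C.D a) b = 0 := by
  rw [dividedPrd_apply, C.sesq, Nat.cast_zero, neg_zero, zero_smul, smul_zero]

theorem inv_factorial_succ_mul (n : ℕ) :
    ((n + 1).factorial : ℂ)⁻¹ * ((n + 1 : ℕ) : ℂ) = (n.factorial : ℂ)⁻¹ := by
  rw [Nat.factorial_succ, Nat.cast_mul, mul_inv_rev, mul_assoc,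
    inv_mul_cancel₀ (Nat.cast_ne_zero.2 n.succ_ne_zero), mul_one]

theorem dividedPrd_D_left_succ (C : LieConformalAlgebra L) (n : ℕ) (a b : L) :
    C.dividedPrd (n + 1) (C.D a) b = -C.dividedPrd n a b := by
  rw [dividedPrd_apply, C.sesq, Nat.add_sub_cancel, smul_smul, mul_neg, inv_factorial_succ_mul,
    neg_smul, dividedPrd_apply]

theorem dividedPrd_D_right_zero (C : LieConformalAlgebra L) (a b : L) :
    C.dividedPrd 0 a (C.D b) = C.D (C.dividedPrd 0 a b) := by
  rw [dividedPrd_apply, C.sesq', Nat.cast_zero, zero_smul, add_zero, dividedPrd_apply, map_smul]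

theorem dividedPrd_D_right_succ (C : LieConformalAlgebra L) (n : ℕ) (a b : L) :
    C.dividedPrd (n + 1) a (C.D b) = C.D (C.dividedPrd (n + 1) a b) + C.dividedPrd n a b := by
  rw [dividedPrd_apply, C.sesq', Nat.add_sub_cancel, smul_add, smul_smul, inv_factorial_succ_mul,
    dividedPrd_apply, dividedPrd_apply, map_smul]

theorem dividedPrd_jacobi (C : LieConformalAlgebra L) (m n : ℕ) (a b c : L) :
    C.dividedPrd m a (C.dividedPrd n b c) - C.dividedPrd n b (C.dividedPrd m a c)
      = ∑ j ∈ range (m + 1),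
        ((m - j + n).choose (m - j) : ℂ) • C.dividedPrd (m - j + n) (C.dividedPrd j a b) c := by
  simp only [dividedPrd_apply, map_smul, LinearMap.smul_apply, smul_smul]
  rw [mul_comm (n.factorial : ℂ)⁻¹, ← smul_sub, C.jacobi, smul_sum]
  refine sum_congr rfl fun j hj => ?_
  obtain ⟨r, rfl⟩ := Nat.exists_eq_add_of_le (mem_range_succ_iff.1 hj)
  rw [smul_smul, Nat.add_sub_cancel_left, add_assoc, Nat.add_sub_cancel_left, Nat.cast_add_choose,
    Nat.cast_add_choose]
  have := Nat.factorial_ne_zero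
  field_simp [this]

theorem dividedPrd_skew (C : LieConformalAlgebra L) {N : ℕ} {a b : L}
    (hN : ∀ n, N ≤ n → C.dividedPrd n b a = 0) (n : ℕ) :
    C.dividedPrd n a b = -∑ j ∈ range N,
      ((-1 : ℂ) ^ (n + j) * ((n + j).choose n : ℂ)) • (C.D ^ j) (C.dividedPrd (n + j) b a) := by
  have hprd {k : ℕ} : (k.factorial : ℂ) • C.dividedPrd k b a = C.prd k b a := by
    rw [dividedPrd_apply, smul_inv_smul₀ (Nat.cast_ne_zero.2 k.factorial_ne_zero)]
  rw [dividedPrd_apply, C.skew, finsum_eq_sum_of_support_subset (s := range N), smul_neg, smul_sum]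
  · refine congrArg _ (sum_congr rfl fun j _ => ?_)
    rw [← hprd, ← Module.End.pow_apply, map_smul, smul_smul, smul_smul, Nat.cast_add_choose]
    congr 1
    ring
  · refine Function.support_subset_iff'.2 fun j hj => ?_
    rw [coe_range, Set.mem_Iio, not_lt] at hj
    rw [← Module.End.pow_apply, ← hprd, hN _ (by omega), smul_zero, map_zero, smul_zero]

theorem hasFiniteSupport_smul_dividedPrd (C : LieConformalAlgebra L) (l : ℂ) (a b : L) :
    Function.HasFiniteSupport fun n => l ^ n • C.dividedPrd n a b := by
  have h := C.eventually_dividedPrd_eq_zero a b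
  rw [← Nat.cofinite_eq_atTop, eventually_cofinite] at h
  exact h.subset fun n hn h0 => hn (by simp only [h0, smul_zero])

/-- The bracket `[a _l b]` evaluated at a number `l`, an element of `L`. -/
def lambdaBracket (C : LieConformalAlgebra L) (l : ℂ) : L →ₗ[ℂ] L →ₗ[ℂ] L :=
  LinearMap.mk₂ ℂ (fun a b => ∑ᶠ n : ℕ, l ^ n • C.dividedPrd n a b)
    (fun a a' b => by
      simp only [map_add, LinearMap.add_apply, smul_add]
      exact finsum_add_distrib (C.hasFiniteSupport_smul_dividedPrd l a b)
        (C.hasFiniteSupport_smul_dividedPrd l a' b))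
    (fun c a b => by
      simp only [map_smul, LinearMap.smul_apply, smul_comm _ c]
      exact (smul_finsum' c (C.hasFiniteSupport_smul_dividedPrd l a b)).symm)
    (fun a b b' => by
      simp only [map_add, smul_add]
      exact finsum_add_distrib (C.hasFiniteSupport_smul_dividedPrd l a b)
        (C.hasFiniteSupport_smul_dividedPrd l a b'))
    (fun c a b => by
      simp only [map_smul, smul_comm _ c]
      exact (smul_finsum' c (C.hasFiniteSupport_smul_dividedPrd l a b)).symm)

theorem lambdaBracket_eq_sum (C : LieConformalAlgebra L) (l : ℂ) {N : ℕ} {a b : L}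
    (hN : ∀ n, N ≤ n → C.dividedPrd n a b = 0) :
    C.lambdaBracket l a b = ∑ n ∈ range N, l ^ n • C.dividedPrd n a b := by
  refine finsum_eq_sum_of_support_subset _ (Function.support_subset_iff'.2 fun n hn => ?_)
  rw [coe_range, Set.mem_Iio, not_lt] at hn
  rw [hN n hn, smul_zero]

theorem lambdaBracket_D_left (C : LieConformalAlgebra L) (l : ℂ) (a b : L) :
    C.lambdaBracket l (C.D a) b = -l • C.lambdaBracket l a b := by
  obtain ⟨N, hN⟩ := eventually_atTop.1 (C.eventually_dividedPrd_eq_zero a b)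
  have hN' (n : ℕ) (hn : N + 1 ≤ n) : C.dividedPrd n (C.D a) b = 0 := by
    obtain ⟨n, rfl⟩ := Nat.exists_eq_add_one_of_ne_zero (by omega : n ≠ 0)
    rw [dividedPrd_D_left_succ, hN n (by omega), neg_zero]
  rw [C.lambdaBracket_eq_sum l hN, C.lambdaBracket_eq_sum l hN', sum_range_succ', smul_sum,
    dividedPrd_D_left_zero, smul_zero, add_zero]
  refine sum_congr rfl fun n _ => ?_
  rw [dividedPrd_D_left_succ, pow_succ', smul_neg, mul_smul, neg_smul]

theorem lambdaBracket_D_right (C : LieConformalAlgebra L) (l : ℂ) (a b : L) :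
    C.lambdaBracket l a (C.D b) = C.D (C.lambdaBracket l a b) + l • C.lambdaBracket l a b := by
  obtain ⟨N, hN⟩ := eventually_atTop.1 (C.eventually_dividedPrd_eq_zero a b)
  have hN' (n : ℕ) (hn : N + 1 ≤ n) : C.dividedPrd n a (C.D b) = 0 := by
    obtain ⟨n, rfl⟩ := Nat.exists_eq_add_one_of_ne_zero (by omega : n ≠ 0)
    rw [dividedPrd_D_right_succ, hN n (by omega), hN (n + 1) (by omega), map_zero, add_zero]
  have hD : C.D (C.lambdaBracket l a b)
      = ∑ n ∈ range (N + 1), l ^ n • C.D (C.dividedPrd n a b) := by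
    rw [C.lambdaBracket_eq_sum l fun n (hn : N + 1 ≤ n) => hN n (by omega), map_sum]
    exact sum_congr rfl fun n _ => map_smul C.D _ _
  rw [hD, C.lambdaBracket_eq_sum l hN, C.lambdaBracket_eq_sum l hN', sum_range_succ', smul_sum,
    sum_range_succ', add_right_comm, ← sum_add_distrib, dividedPrd_D_right_zero]
  congr 1
  refine sum_congr rfl fun n _ => ?_
  rw [dividedPrd_D_right_succ, smul_add, smul_smul, ← pow_succ']

theorem lambdaBracket_aeval_left (C : LieConformalAlgebra L) (l : ℂ) (a b : L) (q : ℂ[X]) :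
    C.lambdaBracket l (aeval C.D q a) b = q.eval (-l) • C.lambdaBracket l a b := by
  induction q using Polynomial.induction_on generalizing a with
  | C c => rw [aeval_C, Module.algebraMap_end_apply, map_smul, LinearMap.smul_apply, eval_C]
  | add p q hp hq =>
    rw [map_add, LinearMap.add_apply, map_add, LinearMap.add_apply, hp, hq, eval_add, add_smul]
  | monomial n c ih =>
    rw [pow_succ, ← mul_assoc, map_mul, aeval_X, Module.End.mul_apply, ih,
      lambdaBracket_D_left, smul_smul, eval_mul_X]

theorem lambdaBracket_aeval_right (C : LieConformalAlgebra L) (l : ℂ) (a b : L) (q : ℂ[X]) :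
    C.lambdaBracket l a (aeval C.D q b)
      = aeval C.D (q.comp (X + Polynomial.C l)) (C.lambdaBracket l a b) := by
  induction q using Polynomial.induction_on generalizing b with
  | C c => rw [C_comp, aeval_C, Module.algebraMap_end_apply, map_smul, Module.algebraMap_end_apply]
  | add p q hp hq =>
    rw [map_add, LinearMap.add_apply, map_add, hp, hq, add_comp, map_add, LinearMap.add_apply]
  | monomial n c ih =>
    rw [pow_succ, ← mul_assoc, map_mul, aeval_X, Module.End.mul_apply, ih, lambdaBracket_D_right,
      mul_X_comp, map_mul, Module.End.mul_apply, map_add (aeval C.D) X, aeval_X, aeval_C,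
      LinearMap.add_apply, Module.algebraMap_end_apply]

theorem eventually_forall_dividedPrd_eq_zero (C : LieConformalAlgebra L) {u v : ℕ → L}
    (h : ∀ᶠ j in atTop, u j = 0 ∨ v j = 0) :
    ∀ᶠ N in atTop, ∀ j k, N ≤ j + k → C.dividedPrd k (u j) (v j) = 0 := by
  obtain ⟨J, hJ⟩ := eventually_atTop.1 h
  have hbound : ∀ᶠ M in atTop, ∀ j ∈ range J, ∀ k ≥ M, C.dividedPrd k (u j) (v j) = 0 :=
    (eventually_all_finset _).2 fun j _ =>
      eventually_forall_ge_atTop.2 (C.eventually_dividedPrd_eq_zero (u j) (v j))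
  obtain ⟨M, hM⟩ := hbound.exists
  filter_upwards [eventually_ge_atTop (J + M)] with N hN j k hjk
  rcases lt_or_ge j J with hj | hj
  · exact hM j (mem_range.2 hj) k (by omega)
  · rcases hJ j hj with h0 | h0 <;> simp only [h0, map_zero, LinearMap.zero_apply]

theorem lambdaBracket_lambdaBracket_eq_sum (C : LieConformalAlgebra L) (l m : ℂ) {N : ℕ}
    {a b c : L} (hbc : ∀ k, N ≤ k → C.dividedPrd k b c = 0)
    (habc : ∀ k j, N ≤ k + j → C.dividedPrd j a (C.dividedPrd k b c) = 0) :
    C.lambdaBracket l a (C.lambdaBracket m b c) = ∑ k ∈ range N, ∑ j ∈ range N,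
      (m ^ k * l ^ j) • C.dividedPrd j a (C.dividedPrd k b c) := by
  rw [C.lambdaBracket_eq_sum m hbc, map_sum]
  refine sum_congr rfl fun k _ => ?_
  rw [map_smul, C.lambdaBracket_eq_sum l fun j (hj : N ≤ j) => habc k j (by omega), smul_sum]
  exact sum_congr rfl fun j _ => smul_smul _ _ _

theorem lambdaBracket_add_lambdaBracket_eq_sum (C : LieConformalAlgebra L) (l m : ℂ) {N : ℕ}
    {a b c : L} (hab : ∀ j, N ≤ j → C.dividedPrd j a b = 0)
    (habc : ∀ j k, N ≤ j + k → C.dividedPrd k (C.dividedPrd j a b) c = 0) :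
    C.lambdaBracket (l + m) (C.lambdaBracket l a b) c
      = ∑ n ∈ range N, ∑ i ∈ range N, (m ^ n * l ^ i) • ∑ j ∈ range (i + 1),
        ((i - j + n).choose (i - j) : ℂ) •
          C.dividedPrd (i - j + n) (C.dividedPrd j a b) c := by
  have hj (j : ℕ) : C.lambdaBracket (l + m) (C.dividedPrd j a b) c
      = ∑ r ∈ range N, ∑ n ∈ range N, (l ^ r * m ^ n * ((r + n).choose r : ℂ)) •
        C.dividedPrd (r + n) (C.dividedPrd j a b) c := by
    have hN (k : ℕ) (hk : N ≤ k) := habc j k (by omega)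
    rw [C.lambdaBracket_eq_sum _ hN, sum_choose_smul_eq_sum_add_pow (Commute.all l m) hN]
  simp only [C.lambdaBracket_eq_sum l hab, map_sum, map_smul, LinearMap.sum_apply,
    LinearMap.smul_apply, hj, smul_sum, smul_smul]
  rw [sum_congr rfl fun j _ => sum_comm, sum_comm]
  refine sum_congr rfl fun n _ => ?_
  rw [sum_range_sum_range_eq_of_triangle fun j r hjr => by rw [habc j _ (by omega), smul_zero]]
  refine sum_congr rfl fun i _ => sum_congr rfl fun j hj => ?_
  rw [← Nat.add_sub_cancel' (mem_range_succ_iff.1 hj), pow_add, Nat.add_sub_cancel_left]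
  congr 1
  ring

theorem lambdaBracket_jacobi (C : LieConformalAlgebra L) (l m : ℂ) (a b c : L) :
    C.lambdaBracket l a (C.lambdaBracket m b c)
      = C.lambdaBracket (l + m) (C.lambdaBracket l a b) c
        + C.lambdaBracket m b (C.lambdaBracket l a c) := by
  have hab := C.eventually_dividedPrd_eq_zero a b
  have hac := C.eventually_dividedPrd_eq_zero a c
  have hbc := C.eventually_dividedPrd_eq_zero b c
  obtain ⟨N, hab, hac, hbc, habc, ha, hb⟩ := ((eventually_forall_ge_atTop.2 hab).and <|
    (eventually_forall_ge_atTop.2 hac).and <| (eventually_forall_ge_atTop.2 hbc).and <|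
    (C.eventually_forall_dividedPrd_eq_zero (v := fun _ => c) (hab.mono fun _ => Or.inl)).and <|
    (C.eventually_forall_dividedPrd_eq_zero (u := fun _ => a) (hbc.mono fun _ => Or.inr)).and
    (C.eventually_forall_dividedPrd_eq_zero (u := fun _ => b) (hac.mono fun _ => Or.inr))).exists
  rw [C.lambdaBracket_lambdaBracket_eq_sum l m hbc ha,
    C.lambdaBracket_lambdaBracket_eq_sum m l hac hb,
    C.lambdaBracket_add_lambdaBracket_eq_sum l m hab habc,
    ← sub_eq_iff_eq_add, sum_comm (γ := ℕ) (s := range N) (t := range N)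
      (f := fun j k => (l ^ j * m ^ k) • C.dividedPrd k b (C.dividedPrd j a c)), ← sum_sub_distrib]
  refine sum_congr rfl fun n _ => ?_
  rw [← sum_sub_distrib]
  refine sum_congr rfl fun i _ => ?_
  rw [mul_comm (l ^ i), ← smul_sub, dividedPrd_jacobi]

theorem lambdaBracket_skew (C : LieConformalAlgebra L) (l : ℂ) {N : ℕ} {a b : L}
    (hN : ∀ n, N ≤ n → C.dividedPrd n b a = 0) :
    C.lambdaBracket l a b
      = -∑ k ∈ range N, aeval C.D ((-Polynomial.C l - X) ^ k) (C.dividedPrd k b a) := by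
  have hN' (n : ℕ) (hn : N ≤ n) : C.dividedPrd n a b = 0 := by
    rw [C.dividedPrd_skew hN, neg_eq_zero]
    refine sum_eq_zero fun j _ => ?_
    rw [hN _ (by omega), map_zero, smul_zero]
  have hpow (k : ℕ) : aeval C.D ((-Polynomial.C l - X) ^ k)
      = (algebraMap ℂ (Module.End ℂ L) (-l) + -C.D) ^ k := by
    rw [map_pow, map_sub, map_neg, aeval_C, aeval_X, map_neg, sub_eq_add_neg]
  have hcomm := Algebra.commutes (A := Module.End ℂ L) (-l) (-C.D)
  simp only [hpow]
  change _ = -∑ k ∈ range N, (algebraMap ℂ (Module.End ℂ L) (-l) + -C.D) ^ k • C.dividedPrd k b a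
  rw [← sum_choose_smul_eq_sum_add_pow hcomm hN, C.lambdaBracket_eq_sum l hN', ← sum_neg_distrib]
  refine sum_congr rfl fun n _ => ?_
  rw [C.dividedPrd_skew hN, smul_neg, smul_sum]
  refine congrArg _ (sum_congr rfl fun j _ => ?_)
  have hcoeff : algebraMap ℂ (Module.End ℂ L) (-l) ^ n * (-C.D) ^ j * ((n + j).choose n : ℕ)
      = (l ^ n * ((-1) ^ (n + j) * ((n + j).choose n : ℂ))) • C.D ^ j := by
    rw [← Nat.cast_comm, ← nsmul_eq_mul, ← Nat.cast_smul_eq_nsmul ℂ, ← map_pow,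
      ← neg_one_smul ℂ C.D, _root_.smul_pow, ← Algebra.smul_def, smul_smul, smul_smul, neg_pow l]
    congr 1
    ring
  rw [hcoeff, Module.End.smul_def, LinearMap.smul_apply, smul_smul]

end LieConformalAlgebra

/-! ### Graded Lie conformal algebras with components of rank one -/

namespace LieConformalAlgebra

variable {L : Type} [AddCommGroup L] [Module ℂ L]

theorem prd_aeval_left_eq_zero (C : LieConformalAlgebra L) {a b : L}
    (h : ∀ n, C.prd n a b = 0) (q : ℂ[X]) (n : ℕ) : C.prd n (aeval C.D q a) b = 0 := by
  induction q using Polynomial.induction_on generalizing n with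
  | C c => rw [aeval_C, Module.algebraMap_end_apply, map_smul, LinearMap.smul_apply, h, smul_zero]
  | add p q hp hq =>
    rw [map_add, LinearMap.add_apply, map_add, LinearMap.add_apply, hp, hq, add_zero]
  | monomial k c ih =>
    rw [pow_succ', mul_left_comm, map_mul, aeval_X, Module.End.mul_apply, C.sesq, ih, smul_zero]

theorem prd_aeval_right_eq_zero (C : LieConformalAlgebra L) {a b : L}
    (h : ∀ n, C.prd n a b = 0) (q : ℂ[X]) (n : ℕ) : C.prd n a (aeval C.D q b) = 0 := by
  induction q using Polynomial.induction_on generalizing n with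
  | C c => rw [aeval_C, Module.algebraMap_end_apply, map_smul, h, smul_zero]
  | add p q hp hq => rw [map_add, LinearMap.add_apply, map_add, hp, hq, add_zero]
  | monomial k c ih =>
    rw [pow_succ', mul_left_comm, map_mul, aeval_X, Module.End.mul_apply, C.sesq', ih, ih,
      map_zero, smul_zero, add_zero]

theorem iterate_D_smul (C : LieConformalAlgebra L) (c : ℂˣ) (k : ℕ) (x : L) :
    (⇑C.D)^[k] (c • x) = c • (⇑C.D)^[k] x := by
  rw [Units.smul_def, Units.smul_def, ← Module.End.pow_apply, map_smul, Module.End.pow_apply]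

end LieConformalAlgebra

namespace GradedLCA

variable {L : Type} [AddCommGroup L] [Module ℂ L]

theorem mem_of_iSup_eq_top (C : GradedLCA L) {T : Set ℤ} (hT : ⨆ i ∈ T, C.G i = ⊤) {k : ℤ}
    (hk : C.G k ≠ ⊥) : k ∈ T := by
  by_contra hkT
  have hle : ⨆ i ∈ T, C.G i ≤ ⨆ j, ⨆ _ : j ≠ k, C.G j :=
    biSup_mono fun i hi => ne_of_mem_of_not_mem hi hkT
  exact hk (disjoint_top.1 ((C.internal.submodule_iSupIndep k).mono_right (hT ▸ hle)))

end GradedLCA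

namespace RankOneContext

variable {L : Type} [AddCommGroup L] [Module ℂ L]

theorem dividedPrd_bas (C : RankOneContext L) (i j : ℤ) (n : ℕ) :
    C.dividedPrd n (C.bas i) (C.bas j) = aeval C.D ((C.sp i j).coeff n) (C.bas (i + j)) :=
  (C.bracketEq_iff _ _ _ _).1 (C.sp_brkt i j) n

theorem dividedPrd_bas_eq_zero (C : RankOneContext L) (i j : ℤ) (n : ℕ)
    (hn : (C.sp i j).natDegree + 1 ≤ n) : C.dividedPrd n (C.bas i) (C.bas j) = 0 := by
  rw [C.dividedPrd_bas, coeff_eq_zero_of_natDegree_lt hn, map_zero, LinearMap.zero_apply]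

theorem sum_aeval_dividedPrd_bas (C : RankOneContext L) (i j : ℤ) (q : ℂ[X]) :
    ∑ n ∈ Finset.range ((C.sp i j).natDegree + 1),
        aeval C.D (q ^ n) (C.dividedPrd n (C.bas i) (C.bas j))
      = aeval C.D ((C.sp i j).eval q) (C.bas (i + j)) := by
  rw [eval_eq_sum_range, map_sum, LinearMap.sum_apply]
  refine Finset.sum_congr rfl fun n _ => ?_
  rw [C.dividedPrd_bas, mul_comm, map_mul, Module.End.mul_apply]

theorem lambdaBracket_bas (C : RankOneContext L) (i j : ℤ) (l : ℂ) :
    C.lambdaBracket l (C.bas i) (C.bas j)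
      = aeval C.D ((C.sp i j).eval (Polynomial.C l)) (C.bas (i + j)) := by
  rw [C.lambdaBracket_eq_sum l (C.dividedPrd_bas_eq_zero i j), ← C.sum_aeval_dividedPrd_bas]
  simp only [← C_pow, aeval_C, Module.algebraMap_end_apply]

theorem lambdaBracket_bas_skew (C : RankOneContext L) (i j : ℤ) (l : ℂ) :
    C.lambdaBracket l (C.bas i) (C.bas j)
      = -aeval C.D ((C.sp j i).eval (-Polynomial.C l - X)) (C.bas (j + i)) := by
  rw [C.lambdaBracket_skew l (C.dividedPrd_bas_eq_zero j i), C.sum_aeval_dividedPrd_bas]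

theorem aeval_bas_injective (C : RankOneContext L) {i : ℤ} (hi : C.G i ≠ ⊥) :
    Function.Injective fun q : ℂ[X] => aeval C.D q (C.bas i) := by
  refine (injective_iff_map_eq_zero
    ((LinearMap.applyₗ (C.bas i)).comp (aeval C.D).toLinearMap)).2 fun q hq => ?_
  have hq' : aeval C.D q (C.bas i) = 0 := hq
  rw [aeval_eq_sum_range, LinearMap.sum_apply] at hq'
  simp only [LinearMap.smul_apply, Module.End.pow_apply] at hq'
  have hcoeff := linearIndependent_iff'.1 (C.bas_indep i hi) _ _ hq'
  ext k
  by_cases hk : k ≤ q.natDegree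
  · exact hcoeff k (Finset.mem_range_succ_iff.2 hk)
  · exact coeff_eq_zero_of_natDegree_lt (not_le.1 hk)

theorem exists_aeval_bas_eq (C : RankOneContext L) {i : ℤ} {x : L} (hx : x ∈ C.G i) :
    ∃ q : ℂ[X], aeval C.D q (C.bas i) = x := by
  by_cases hi : C.G i = ⊥
  · rw [hi, Submodule.mem_bot] at hx
    exact ⟨0, by rw [map_zero, LinearMap.zero_apply, hx]⟩
  · suffices C.G i ≤ ((LinearMap.applyₗ (C.bas i)).comp (aeval C.D).toLinearMap).range from this hx
    rw [C.bas_span i hi, Submodule.span_le]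
    rintro _ ⟨k, rfl⟩
    exact ⟨X ^ k, by simp [Module.End.pow_apply]⟩

theorem prd_eq_zero_of_sp_eq_zero (C : RankOneContext L) {i j : ℤ} (h : C.sp i j = 0) {a b : L}
    (ha : a ∈ C.G i) (hb : b ∈ C.G j) (n : ℕ) : C.prd n a b = 0 := by
  obtain ⟨p, rfl⟩ := C.exists_aeval_bas_eq ha
  obtain ⟨q, rfl⟩ := C.exists_aeval_bas_eq hb
  refine C.prd_aeval_left_eq_zero (C.prd_aeval_right_eq_zero (fun k => ?_) q) p n
  rw [C.sp_brkt, h, coeff_zero, sum_zero_index, smul_zero]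

/-- The structure polynomial `p_{i,j}(∂, λ)` as a function of the values of `∂` and `λ`. -/
def structureFunction (C : RankOneContext L) (i j : ℤ) (x l : ℂ) : ℂ :=
  (C.sp i j).evalEval x l

theorem structureFunction_eq_zero_iff (C : RankOneContext L) {i j : ℤ} :
    C.structureFunction i j = 0 ↔ C.sp i j = 0 := by
  refine ⟨fun h => eq_zero_of_forall_evalEval_eq_zero fun x l => congrFun₂ h x l, fun h => ?_⟩
  ext x l
  rw [structureFunction, h, evalEval_zero, Pi.zero_apply, Pi.zero_apply]

theorem structureFunction_eq_zero_of_eq_bot (C : RankOneContext L) {i j : ℤ}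
    (h : C.G i = ⊥ ∨ C.G j = ⊥ ∨ C.G (i + j) = ⊥) : C.structureFunction i j = 0 :=
  C.structureFunction_eq_zero_iff.2 (C.sp_zero i j h)

theorem structureFunction_skew (C : RankOneContext L) (i j : ℤ) (x l : ℂ) :
    C.structureFunction i j x l = -C.structureFunction j i x (-l - x) := by
  by_cases hij : C.G (i + j) = ⊥
  · rw [C.structureFunction_eq_zero_of_eq_bot (.inr (.inr hij)),
      C.structureFunction_eq_zero_of_eq_bot (i := j) (.inr (.inr (by rwa [add_comm]))),
      Pi.zero_apply, Pi.zero_apply, Pi.zero_apply, neg_zero]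
  have h := C.lambdaBracket_bas_skew i j l
  rw [C.lambdaBracket_bas, add_comm j i, ← LinearMap.neg_apply, ← map_neg] at h
  have h' := congrArg (eval x) (C.aeval_bas_injective hij h)
  rwa [eval_neg, eval_eval_eq_evalEval, eval_eval_eq_evalEval, eval_sub, eval_neg, eval_C,
    eval_X] at h'

theorem structureFunction_jacobi (C : RankOneContext L) (i j k : ℤ) (x l m : ℂ) :
    C.structureFunction j k (x + l) m * C.structureFunction i (j + k) x l
      = C.structureFunction i j (-l - m) l * C.structureFunction (i + j) k x (l + m)
        + C.structureFunction i k (x + m) l * C.structureFunction j (i + k) x m := by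
  by_cases hijk : C.G (i + (j + k)) = ⊥
  · rw [C.structureFunction_eq_zero_of_eq_bot (.inr (.inr hijk)),
      C.structureFunction_eq_zero_of_eq_bot (i := i + j) (.inr (.inr (by rwa [add_assoc]))),
      C.structureFunction_eq_zero_of_eq_bot (i := j) (j := i + k)
        (.inr (.inr (by rwa [add_left_comm])))]
    simp only [Pi.zero_apply, mul_zero, add_zero]
  have h := C.lambdaBracket_jacobi l m (C.bas i) (C.bas j) (C.bas k)
  simp only [lambdaBracket_bas, LieConformalAlgebra.lambdaBracket_aeval_left,
    LieConformalAlgebra.lambdaBracket_aeval_right, add_assoc, add_left_comm j i k] at h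
  simp only [← Module.End.mul_apply, ← map_mul, ← LinearMap.smul_apply] at h
  rw [← map_smul, ← LinearMap.add_apply, ← map_add] at h
  have h' := congrArg (eval x) (C.aeval_bas_injective hijk h)
  simp only [eval_add, eval_mul, eval_smul, eval_comp, eval_X, eval_C, smul_eq_mul] at h'
  rwa [neg_add'] at h'

theorem structureFunction_zero_zero (C : RankOneContext L) (x l : ℂ) :
    C.structureFunction 0 0 x l = 0 := by
  have hab (n : ℕ) (_ : 0 ≤ n) : C.dividedPrd n (C.bas 0) (C.bas 0) = 0 := by
    rw [C.dividedPrd_apply, C.abelian0 n _ (C.bas_mem 0) _ (C.bas_mem 0), smul_zero]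
  have hsp : (0 : ℂ[X]) = (C.sp 0 0).eval (Polynomial.C l) :=
    C.aeval_bas_injective C.supp_zero (by
      simpa only [C.lambdaBracket_eq_sum l hab, Finset.sum_range_zero, map_zero,
        LinearMap.zero_apply, add_zero] using C.lambdaBracket_bas 0 0 l)
  rw [structureFunction, evalEval, ← hsp, eval_zero]

theorem isStructureSystem (C : RankOneContext L) : IsStructureSystem C.structureFunction where
  poly i j := ⟨C.sp i j, fun _ _ => rfl⟩
  jacobi := C.structureFunction_jacobi
  skew := C.structureFunction_skew
  zero_zero := C.structureFunction_zero_zero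

theorem linearIndependent_iterate_smul_bas (C : RankOneContext L) {i : ℤ} (hi : C.G i ≠ ⊥)
    (c : ℂˣ) : LinearIndependent ℂ fun k : ℕ => (⇑C.D)^[k] (c • C.bas i) := by
  simp only [C.iterate_D_smul]
  exact (C.bas_indep i hi).units_smul fun _ => c

theorem span_iterate_smul_bas (C : RankOneContext L) {i : ℤ} (hi : C.G i ≠ ⊥) (c : ℂˣ) :
    C.G i = Submodule.span ℂ (Set.range fun k : ℕ => (⇑C.D)^[k] (c • C.bas i)) := by
  simp only [C.iterate_D_smul]
  rw [C.bas_span i hi, ← Submodule.span_smul_eq_of_isUnit _ _ c.isUnit, ← Set.range_smul]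
  rfl

theorem bracketEq_smul_bas (C : RankOneContext L) {i j : ℤ} {q : ℂ[X][X]} {a b c : ℂˣ}
    (h : ∀ x l, C.structureFunction i j x l = ↑(c / (a * b)) * q.evalEval x l) :
    C.BracketEq (a • C.bas i) (b • C.bas j) (c • C.bas (i + j)) q := by
  have hsp : C.sp i j = Pc ↑(c / (a * b)) * q :=
    sub_eq_zero.1 <| eq_zero_of_forall_evalEval_eq_zero fun x l => by
      rw [evalEval_sub, evalEval_mul, Pc, evalEval_C, eval_C, ← h, structureFunction, sub_self]
  refine (C.bracketEq_iff _ _ _ _).2 fun n => ?_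
  have hcoeff : (a : ℂ) * b * ↑(c / (a * b)) = c := by
    rw [← Units.val_mul, ← Units.val_mul, mul_div_cancel]
  simp only [Units.smul_def, map_smul, LinearMap.smul_apply]
  rw [C.dividedPrd_bas, hsp, Pc, coeff_C_mul, map_mul, aeval_C, Module.End.mul_apply,
    Module.algebraMap_end_apply, smul_smul, smul_smul]
  congr 1
  linear_combination hcoeff

theorem exists_bracketEq_smul_bas (C : RankOneContext L) {m n : ℤ} {a b c : ℂˣ}
    (h : HasSlope (C.structureFunction m n) m n ↑(c / (a * b))) :
    ∃ d, C.BracketEq (a • C.bas m) (b • C.bas n) (c • C.bas (m + n))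
      (Pc (m : ℂ) * Pd + Pc ((m : ℂ) + (n : ℂ)) * Pl + Pc d) := by
  obtain ⟨B, hB⟩ := h
  refine ⟨B / ↑(c / (a * b)), C.bracketEq_smul_bas fun x l => ?_⟩
  simp only [Pc, Pd, Pl, evalEval_add, evalEval_mul, evalEval_C, evalEval_X, eval_C, eval_X]
  rw [hB, mul_add _ _ (B / _), mul_div_cancel₀ _ (Units.ne_zero _)]

end RankOneContext

namespace ClassV

variable {L : Type} [AddCommGroup L] [Module ℂ L]

theorem degree_induction (C : ClassV L) {T : Set ℤ} (zero : 0 ∈ T) (one : 1 ∈ T)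
    (neg_one : -1 ∈ T) (add : ∀ i ∈ T, ∀ j ∈ T, C.structureFunction i j ≠ 0 → i + j ∈ T) {k : ℤ}
    (hk : C.G k ≠ ⊥) : k ∈ T := by
  set N := ⨆ i ∈ T, C.G i
  have hle {i : ℤ} (hi : i ∈ T) : C.G i ≤ N := le_biSup C.G hi
  have hD : N ≤ N.comap C.D := iSup₂_le fun i hi x hx => hle hi (C.dGrade i x hx)
  have hprd (n : ℕ) {i j : ℤ} (hi : i ∈ T) (hj : j ∈ T) {a b : L} (ha : a ∈ C.G i)
      (hb : b ∈ C.G j) : C.prd n a b ∈ N := by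
    by_cases hF : C.structureFunction i j = 0
    · rw [C.prd_eq_zero_of_sp_eq_zero (C.structureFunction_eq_zero_iff.1 hF) ha hb]
      exact zero_mem N
    · exact hle (add i hi j hj hF) (C.prdGrade i j n a ha b hb)
  have hright (n : ℕ) {i : ℤ} (hi : i ∈ T) {a : L} (ha : a ∈ C.G i) : N ≤ N.comap (C.prd n a) :=
    iSup₂_le fun j hj b hb => hprd n hi hj ha hb
  have hleft (n : ℕ) {b : L} (hb : b ∈ N) : N ≤ N.comap ((C.prd n).flip b) :=
    iSup₂_le fun i hi a ha => hright n hi ha hb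
  exact C.mem_of_iSup_eq_top (C.genV N (fun _ hx => hD hx) (fun n _ ha _ hb => hleft n hb ha)
    (hle one) (hle zero) (hle neg_one)) hk

theorem hasWeight_of_ne_bot (C : ClassV L) {c d : ℂ} (h₁ : HasWeight C.structureFunction c d 1)
    {k : ℤ} (hk : C.G k ≠ ⊥) : HasWeight C.structureFunction c d k :=
  C.degree_induction (T := {k | HasWeight C.structureFunction c d k})
    (fun x l => by rw [C.isStructureSystem.zero_zero, Int.cast_zero, zero_mul]) h₁
    (C.isStructureSystem.hasWeight_neg_one h₁ (mt C.structureFunction_eq_zero_iff.1 C.ne_m11))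
    (fun _ hi _ hj => C.isStructureSystem.hasWeight_add hi hj) hk

theorem exists_hasWeight_one (C : ClassV L) (hdeg : (C.sp 0 1).natDegree = 1)
    (hcoeff : ∀ n, ((C.sp 0 1).coeff n).natDegree = 0) :
    ∃ c d, c ≠ 0 ∧ HasWeight C.structureFunction c d 1 := by
  obtain ⟨c, d, hc, h⟩ := exists_evalEval_eq_mul_snd_add hdeg hcoeff
  exact ⟨c, d, hc, fun x l => by rw [Int.cast_one, one_mul]; exact h x l⟩

theorem exists_hasSlope_neg_one_one (C : ClassV L) (hdeg : (C.sp (-1) 1).natDegree = 0)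
    (hcoeff : ((C.sp (-1) 1).coeff 0).natDegree = 1) :
    ∃ a, a ≠ 0 ∧ HasSlope (C.structureFunction (-1) 1) (-1 : ℤ) (1 : ℤ) a := by
  obtain ⟨a, b, ha, h⟩ := exists_evalEval_eq_mul_fst_add hdeg hcoeff
  refine ⟨-a, neg_ne_zero.2 ha, b, fun x l => ?_⟩
  rw [RankOneContext.structureFunction, h]
  push_cast
  ring

end ClassV

/-- for a class `𝒱` algebra with `deg p_{-1,1}(∂) = 1` and
`deg p_{0,1}(λ) = 1`, `Supp(L) = ℤ` and the bases may be rechosen so that the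
degree-one part of each `p_{m,n}` is `m∂ + (m+n)λ`. -/
theorem classV_deg_one_one_normal_form
    {L : Type} [AddCommGroup L] [Module ℂ L] (C : ClassV L)
    (hmem₁ : (C.sp (-1) 1).natDegree = 0)
    (hmem₀ : ∀ n : ℕ, ((C.sp 0 1).coeff n).natDegree = 0)
    (hdeg₁ : ((C.sp (-1) 1).coeff 0).natDegree = 1)
    (hdeg₀ : (C.sp 0 1).natDegree = 1) :
    (∀ i : ℤ, C.G i ≠ ⊥) ∧
    ∃ (v : ℤ → L) (q : ℤ → ℤ → Polynomial (Polynomial ℂ)),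
      (∀ i : ℤ, v i ∈ C.G i) ∧
      (∀ i : ℤ, LinearIndependent ℂ fun k : ℕ => (⇑C.D)^[k] (v i)) ∧
      (∀ i : ℤ, C.G i = Submodule.span ℂ (Set.range fun k : ℕ => (⇑C.D)^[k] (v i))) ∧
      (∀ i j : ℤ, C.toLieConformalAlgebra.BracketEq (v i) (v j) (v (i + j)) (q i j)) ∧
      (∀ m n : ℤ, ∃ d : ℂ,
        q m n = Pc (m : ℂ) * Pd + Pc ((m : ℂ) + (n : ℂ)) * Pl + Pc d) := by
  obtain ⟨c, d, hc, h₁⟩ := C.exists_hasWeight_one hdeg₀ hmem₀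
  obtain ⟨a, ha, hneg⟩ := C.exists_hasSlope_neg_one_one hmem₁ hdeg₁
  have hbot {i j : ℤ} (hij : C.structureFunction i j ≠ 0) : C.G i ≠ ⊥ ∧ C.G j ≠ ⊥ :=
    ⟨fun h => hij (C.structureFunction_eq_zero_of_eq_bot (.inl h)),
      fun h => hij (C.structureFunction_eq_zero_of_eq_bot (.inr (.inl h)))⟩
  obtain ⟨hne, s, hs⟩ := C.isStructureSystem.ne_zero_and_exists_hasSlope
    (fun _ _ hij => (hbot hij).imp (C.hasWeight_of_ne_bot h₁) (C.hasWeight_of_ne_bot h₁))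
    h₁ hc hneg ha
  have hG (k : ℤ) : C.G k ≠ ⊥ := (hbot (hne k)).2
  choose e he using fun m n => C.exists_bracketEq_smul_bas (hs m n)
  exact ⟨hG, fun i => s i • C.bas i, _, fun i => (C.G i).smul_mem _ (C.bas_mem i),
    fun i => C.linearIndependent_iterate_smul_bas (hG i) (s i),
    fun i => C.span_iterate_smul_bas (hG i) (s i), he, fun m n => ⟨e m n, rfl⟩⟩
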